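/- Let R > 0, a < b with ab > 0, and let F be a smooth (−3)-homogeneous ℝ³-valued function on the closure of Ω_{a,b,R} minus the axis {x' = 0}. Suppose q is a smooth (−2)-homogeneous function on the closure of Ω_{a,b,R} minus {x' = 0} satisfying −Δq = div F on Ω_{a,b,R} \ {x' = 0}. Assume there exists δ ∈ (0,2) such that |q(x)||x'|^{2−δ} + Σ_{j=0}^{2} |∇^j F(x)| |x'|^{j+2−δ} → 0 as |x'| → 0, uniformly on Ω_{a,b,R} \ {x' = 0}. Then there exist continuous functions a₀, a₁, b₁ on (a,b) and a function h on Ω_{a,b,R}, smooth away from {x' = 0}, such that q(x) = h(x) + a₀(x₃) ln|x'| + a₁(x₃) x₁/|x'|² + b₁(x₃) x₂/|x'|² on Ω_{a,b,R} \ {x' = 0}, and for every s with 1 < s < 2/(2−δ) and every compact subinterval [a',b'] ⊂ (a,b), sup_{x₃∈[a',b']} ( ‖h(·,x₃)‖_{L^s(D_R)} + ‖∇_{x'} h(·,x₃)‖_{L^s(D_R)} ) < ∞. -/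

import Mathlib

noncomputable section

open Real Filter MeasureTheory Metric Topology
open scoped ENNReal InnerProductSpace

abbrev V3 := EuclideanSpace ℝ (Fin 3)
abbrev V2 := EuclideanSpace ℝ (Fin 2)

/-- standard basis vector in `ℝ³` -/
def e3 (j : Fin 3) : V3 := EuclideanSpace.single j 1

/-- partial derivative `∂_j f` -/
def pd (j : Fin 3) (f : V3 → ℝ) (x : V3) : ℝ := fderiv ℝ f x (e3 j)

/-- Laplacian on `ℝ³` -/
def lap3 (f : V3 → ℝ) (x : V3) : ℝ := ∑ j, pd j (fun y => pd j f y) x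

/-- stationary Navier–Stokes equations `-Δu + (u·∇)u + ∇p = 0`, `div u = 0` at `x` -/
def NSEq (u : V3 → V3) (p : V3 → ℝ) (x : V3) : Prop :=
  (∀ i, - lap3 (fun z => u z i) x + (∑ j, u x j * pd j (fun z => u z i) x) + pd i p x = 0)
  ∧ (∑ j, pd j (fun z => u z j) x) = 0

/-- stationary Euler equations `(u·∇)u + ∇p = 0`, `div u = 0` at `x` -/
def EulerEq (u : V3 → V3) (p : V3 → ℝ) (x : V3) : Prop :=
  (∀ i, (∑ j, u x j * pd j (fun z => u z i) x) + pd i p x = 0)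
  ∧ (∑ j, pd j (fun z => u z j) x) = 0

/-- south pole -/
def S3 : V3 := EuclideanSpace.single 2 (-1)
/-- north pole -/
def N3 : V3 := EuclideanSpace.single 2 1

/-- the unit sphere `S²` -/
def sphere2 : Set V3 := Metric.sphere (0 : V3) 1

/-- the open cone over a subset of the unit sphere -/
def cone3 (Ω : Set V3) : Set V3 := {x : V3 | x ≠ 0 ∧ (‖x‖⁻¹ • x) ∈ Ω}

/-- `|x'| = √(x₁² + x₂²)` -/
def rho (x : V3) : ℝ := Real.sqrt ((x 0) ^ 2 + (x 1) ^ 2)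

/-- the `x₃`-axis `{x' = 0}` -/
def axis3 : Set V3 := {x : V3 | x 0 = 0 ∧ x 1 = 0}

/-- `Ω_{a,b,R} = {a < x₃ < b, |x'| < R}` -/
def OmegaR (a b R : ℝ) : Set V3 := {x : V3 | a < x 2 ∧ x 2 < b ∧ rho x < R}

/-- build a point of `ℝ³` from `x' ∈ ℝ²` and `x₃ ∈ ℝ` -/
def emb (y : V2) (t : ℝ) : V3 := (EuclideanSpace.equiv (Fin 3) ℝ).symm ![y 0, y 1, t]

/-- spherical component `u_r = u · e_r` -/
def uRc (u : V3 → V3) (x : V3) : ℝ := (u x 0 * x 0 + u x 1 * x 1 + u x 2 * x 2) / ‖x‖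

/-- spherical component `u_θ = u · e_θ` -/
def uTc (u : V3 → V3) (x : V3) : ℝ :=
  (u x 0 * x 0 * x 2 + u x 1 * x 1 * x 2) / (‖x‖ * rho x) - u x 2 * rho x / ‖x‖

/-- spherical component `u_φ = u · e_φ` -/
def uPc (u : V3 → V3) (x : V3) : ℝ := (-(u x 0) * x 1 + u x 1 * x 0) / rho x

/-- axisymmetry on a set: the spherical components are independent of the meridian angle -/
def AxisymOn (u : V3 → V3) (Ω : Set V3) : Prop :=
  ∀ x ∈ Ω, ∀ y ∈ Ω, ‖x‖ = ‖y‖ → x 2 = y 2 →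
    uRc u x = uRc u y ∧ uTc u x = uTc u y ∧ uPc u x = uPc u y

/-- spherical frame vector `e_r` -/
def eRv (x : V3) : V3 := ‖x‖⁻¹ • x

/-- spherical frame vector `e_θ` -/
def eThv (x : V3) : V3 := (EuclideanSpace.equiv (Fin 3) ℝ).symm
  ![x 2 * x 0 / (‖x‖ * rho x), x 2 * x 1 / (‖x‖ * rho x), -(rho x) / ‖x‖]

/-- spherical frame vector `e_φ` -/
def ePhv (x : V3) : V3 := (EuclideanSpace.equiv (Fin 3) ℝ).symm ![-(x 1) / rho x, x 0 / rho x, 0]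

/-- the spherical cap `S² ∩ B_δ(S) \ {S}` -/
def NSCap (δ : ℝ) : Set V3 := (sphere2 ∩ Metric.ball S3 δ) \ {S3}

/-- the spherical cap `S² ∩ B_δ(S)` -/
def NSCapFull (δ : ℝ) : Set V3 := sphere2 ∩ Metric.ball S3 δ

/-!
Write `κ = 2 - δ`. The smallness hypothesis bounds `q` by `|x'| ^ (-κ)`, and interior estimates for
the Poisson equation on balls of radius comparable to `|x'|` then bound each derivative of `q` at
the cost of one power of `|x'|`. Homogeneity does better along the axis: Euler's identity
`x · ∇q = -2 q` expresses `∂₃q` through `q` and `x₁ ∂₁q + x₂ ∂₂q`, so `∂₃` costs no power at all,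
and on a slice `x₃ = t₀` the planar Laplacian of `q` is only `O(|x'| ^ (-κ - 1))`.

Identify the slice with `ℂ`. The complex gradient `W = ∂₁q - i ∂₂q` satisfies
`∂W/∂z̄ = O(|z| ^ (-κ - 1))`, and the Cauchy-Pompeiu formula applied to `z ^ k W`, with `k = 1` if
`κ < 1` and `k = 2` otherwise, shows that `W = c / z ^ k + O(|z| ^ (-κ'))` for every `κ' > κ`. When
`k = 1` the residue `c` is real because `q` is single valued. Integrating gives the logarithm or the
two dipoles on one slice; homogeneity carries them to every slice, and the remainder lies in `L^s`
as soon as `κ' s < 2`.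
-/

/-- Twice the Wirtinger derivative `∂f/∂z̄`, that is `∂₁f + i ∂₂f`. -/
def dbar (f : ℂ → ℂ) (z : ℂ) : ℂ := fderiv ℝ f z 1 + Complex.I * fderiv ℝ f z Complex.I

section CauchyPompeiu

variable {φ : ℂ → ℂ} {ζ : ℂ}

lemma map_add_I_mul_map_mul_I (L : ℂ →L[ℝ] ℂ) (w : ℂ) :
    L w + Complex.I * L (w * Complex.I)
      = (starRingEnd ℂ) w * (L 1 + Complex.I * L Complex.I) := by
  have hw : L w = w.re * L 1 + w.im * L Complex.I := by
    conv_lhs => rw [show w = w.re • (1 : ℂ) + w.im • Complex.I by simp]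
    rw [map_add, map_smul, map_smul, Complex.real_smul, Complex.real_smul]
  have hwI : L (w * Complex.I) = w.re * L Complex.I - w.im * L 1 := by
    have hdecomp : w * Complex.I = w.re • Complex.I - w.im • (1 : ℂ) := by
      conv_lhs => rw [← Complex.re_add_im w]
      simp only [Complex.real_smul]
      linear_combination (w.im : ℂ) * Complex.I_sq
    rw [hdecomp, map_sub, map_smul, map_smul, Complex.real_smul, Complex.real_smul]
  have hconj : (starRingEnd ℂ) w = w.re - w.im * Complex.I := by
    apply Complex.ext <;> simp
  rw [hw, hwI, hconj]
  linear_combination w.im * L Complex.I * Complex.I_sq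

lemma smul_inv_mul_dbar_circleMap {r : ℝ} (hr : r ≠ 0) (θ : ℝ) :
    r • ((circleMap 0 r θ)⁻¹ * dbar φ (circleMap 0 r θ))
      = fderiv ℝ φ (circleMap 0 r θ) (circleMap 0 1 θ)
        + Complex.I * fderiv ℝ φ (circleMap 0 r θ) (circleMap 0 1 θ * Complex.I) := by
  have hsplit : circleMap 0 r θ = r * circleMap 0 1 θ := by simp [circleMap]
  have hunit : (circleMap 0 1 θ)⁻¹ = (starRingEnd ℂ) (circleMap 0 1 θ) := by
    rw [Complex.inv_def, Complex.normSq_eq_norm_sq, norm_circleMap_zero]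
    simp
  rw [map_add_I_mul_map_mul_I, ← hunit, ← dbar, Complex.real_smul]
  conv_lhs => rw [hsplit, mul_inv, ← hsplit]
  have hr' : (r : ℂ) ≠ 0 := Complex.ofReal_ne_zero.2 hr
  field_simp

lemma integrableOn_Ioi_prod_Ioo_of_continuous {f : ℝ × ℝ → ℂ} {R : ℝ} (hf : Continuous f)
    (hf0 : ∀ p, R ≤ p.1 → f p = 0) (a b : ℝ) :
    IntegrableOn f (Set.Ioi (0 : ℝ) ×ˢ Set.Ioo a b) := by
  have hcompact : IntegrableOn f (Set.Icc (0 : ℝ) R ×ˢ Set.Icc a b) :=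
    hf.continuousOn.integrableOn_compact (isCompact_Icc.prod isCompact_Icc)
  refine (hcompact.mono_set (Set.prod_mono Set.Ioc_subset_Icc_self
    Set.Ioo_subset_Icc_self)).of_forall_sdiff_eq_zero (measurableSet_Ioi.prod measurableSet_Ioo) ?_
  rintro ⟨r, θ⟩ ⟨⟨hr, hθ⟩, hnot⟩
  exact hf0 _ (le_of_not_ge fun h => hnot ⟨⟨hr, h⟩, hθ⟩)

lemma integral_Ioi_fderiv_circleMap (hφ : ContDiff ℝ 1 φ) (hc : HasCompactSupport φ) (θ : ℝ) :
    ∫ r in Set.Ioi (0 : ℝ), fderiv ℝ φ (circleMap 0 r θ) (circleMap 0 1 θ) = -φ 0 := by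
  have hunit : circleMap 0 1 θ ≠ 0 := by simp
  have hray : ∀ r : ℝ, circleMap 0 r θ = r * circleMap 0 1 θ := fun r => by simp [circleMap]
  have hline : IsClosedEmbedding fun r : ℝ => r • circleMap 0 1 θ :=
    LinearMap.isClosedEmbedding_of_injective (f := LinearMap.toSpanSingleton ℝ ℂ (circleMap 0 1 θ))
      (LinearMap.ker_toSpanSingleton ℝ hunit)
  have hderiv : ∀ r : ℝ, HasDerivAt (fun r : ℝ => φ (r • circleMap 0 1 θ))
      (fderiv ℝ φ (circleMap 0 r θ) (circleMap 0 1 θ)) r := fun r => by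
    rw [hray r, ← Complex.real_smul]
    have hsmul : HasDerivAt (fun r : ℝ => r • circleMap 0 1 θ) (circleMap 0 1 θ) r := by
      simpa using (hasDerivAt_id r).smul_const (circleMap 0 1 θ)
    exact (hφ.differentiable one_ne_zero _).hasFDerivAt.comp_hasDerivAt r hsmul
  have hcont : ContDiff ℝ 1 fun r : ℝ => φ (r • circleMap 0 1 θ) :=
    hφ.comp (contDiff_id.smul contDiff_const)
  have hsupp : HasCompactSupport fun r : ℝ => φ (r • circleMap 0 1 θ) :=
    hc.comp_isClosedEmbedding hline
  have hint := hsupp.integral_Ioi_deriv_eq hcont 0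
  simpa only [(hderiv _).deriv, zero_smul] using hint

lemma integral_fderiv_circleMap_mul_I (hφ : ContDiff ℝ 1 φ) {r : ℝ} (hr : r ≠ 0) :
    ∫ θ in Set.Ioo (-π) π, fderiv ℝ φ (circleMap 0 r θ) (circleMap 0 1 θ * Complex.I) = 0 := by
  have hderiv : ∀ θ : ℝ, HasDerivAt (fun θ => φ (circleMap 0 r θ))
      (r * fderiv ℝ φ (circleMap 0 r θ) (circleMap 0 1 θ * Complex.I)) θ := fun θ => by
    have hmul : circleMap 0 r θ * Complex.I = r • (circleMap 0 1 θ * Complex.I) := by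
      simp [circleMap, mul_assoc]
    have := (hφ.differentiable one_ne_zero _).hasFDerivAt.comp_hasDerivAt θ
      (hasDerivAt_circleMap 0 r θ)
    rwa [hmul, map_smul, Complex.real_smul] at this
  have hcont : Continuous fun θ => fderiv ℝ φ (circleMap 0 r θ) (circleMap 0 1 θ * Complex.I) :=
    ((hφ.continuous_fderiv one_ne_zero).comp (continuous_circleMap 0 r)).clm_apply
      ((continuous_circleMap 0 1).mul continuous_const)
  have hzero : ∫ θ in (-π)..π,
      r * fderiv ℝ φ (circleMap 0 r θ) (circleMap 0 1 θ * Complex.I) = 0 := by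
    rw [intervalIntegral.integral_eq_sub_of_hasDerivAt (fun θ _ => hderiv θ)
      ((continuous_const.mul hcont).intervalIntegrable _ _), sub_eq_zero]
    congr 1
    simp [circleMap]
  rw [intervalIntegral.integral_const_mul, mul_eq_zero] at hzero
  rw [← integral_Ioc_eq_integral_Ioo, ← intervalIntegral.integral_of_le (by linarith [pi_pos])]
  exact hzero.resolve_left (Complex.ofReal_ne_zero.2 hr)

lemma integral_inv_mul_dbar_eq_polar (φ : ℂ → ℂ) :
    ∫ z, z⁻¹ * dbar φ z
      = ∫ p in Set.Ioi (0 : ℝ) ×ˢ Set.Ioo (-π) π,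
        (fderiv ℝ φ (circleMap 0 p.1 p.2) (circleMap 0 1 p.2)
          + Complex.I * fderiv ℝ φ (circleMap 0 p.1 p.2) (circleMap 0 1 p.2 * Complex.I)) := by
  rw [← Complex.integral_comp_polarCoord_symm]
  refine setIntegral_congr_fun (measurableSet_Ioi.prod measurableSet_Ioo) ?_
  rintro ⟨r, θ⟩ ⟨hr, -⟩
  have hsymm : Complex.polarCoord.symm (r, θ) = circleMap 0 r θ := by
    simp [Complex.polarCoord_symm_apply, circleMap, Complex.exp_mul_I]
  simp only [hsymm]
  exact smul_inv_mul_dbar_circleMap (ne_of_gt hr) θ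

lemma integral_inv_mul_dbar (hφ : ContDiff ℝ 1 φ) (hc : HasCompactSupport φ) :
    ∫ z, z⁻¹ * dbar φ z = -(2 * π) * φ 0 := by
  set A : ℝ × ℝ → ℂ := fun p => fderiv ℝ φ (circleMap 0 p.1 p.2) (circleMap 0 1 p.2) with hA
  set B : ℝ × ℝ → ℂ := fun p =>
    fderiv ℝ φ (circleMap 0 p.1 p.2) (circleMap 0 1 p.2 * Complex.I)
  have hφ' : Continuous fun p : ℝ × ℝ => fderiv ℝ φ (circleMap 0 p.1 p.2) :=
    (hφ.continuous_fderiv one_ne_zero).comp (by unfold circleMap; fun_prop)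
  obtain ⟨R, -, hR⟩ := (hc.fderiv (𝕜 := ℝ)).isCompact.isBounded.exists_pos_norm_lt
  have hvanish : ∀ p : ℝ × ℝ, R ≤ p.1 → fderiv ℝ φ (circleMap 0 p.1 p.2) = 0 := fun p hp => by
    refine image_eq_zero_of_notMem_tsupport fun h => (hR _ h).not_ge ?_
    rw [norm_circleMap_zero]
    exact hp.trans (le_abs_self _)
  have hAint : IntegrableOn A (Set.Ioi (0 : ℝ) ×ˢ Set.Ioo (-π) π) :=
    integrableOn_Ioi_prod_Ioo_of_continuous (R := R)
      (hφ'.clm_apply (by unfold circleMap; fun_prop))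
      (fun p hp => by simp [hvanish p hp]) _ _
  have hBint : IntegrableOn B (Set.Ioi (0 : ℝ) ×ˢ Set.Ioo (-π) π) :=
    integrableOn_Ioi_prod_Ioo_of_continuous (R := R)
      (hφ'.clm_apply (by unfold circleMap; fun_prop))
      (fun p hp => by simp [hvanish p hp]) _ _
  have hA_eval : ∫ p in Set.Ioi (0 : ℝ) ×ˢ Set.Ioo (-π) π, A p = -(2 * π) * φ 0 := by
    rw [Measure.volume_eq_prod] at hAint ⊢
    rw [setIntegral_prod _ hAint,
      integral_integral_swap (by rw [Measure.prod_restrict]; exact hAint)]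
    simp only [hA, integral_Ioi_fderiv_circleMap hφ hc, setIntegral_const, Real.volume_real_Ioo,
      Complex.real_smul]
    rw [max_eq_left (by linarith [pi_pos])]
    push_cast
    ring
  have hB_eval : ∫ p in Set.Ioi (0 : ℝ) ×ˢ Set.Ioo (-π) π, B p = 0 := by
    rw [Measure.volume_eq_prod] at hBint ⊢
    rw [setIntegral_prod _ hBint, setIntegral_congr_fun measurableSet_Ioi
      fun r hr => integral_fderiv_circleMap_mul_I hφ (ne_of_gt hr), integral_zero]
  rw [integral_inv_mul_dbar_eq_polar, integral_add hAint (hBint.const_mul _), integral_const_mul,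
    hA_eval, hB_eval, mul_zero, add_zero]

theorem integral_inv_sub_mul_dbar (hφ : ContDiff ℝ 1 φ) (hc : HasCompactSupport φ) (ζ : ℂ) :
    ∫ z, (z - ζ)⁻¹ * dbar φ z = -(2 * π) * φ ζ := by
  have h := integral_inv_mul_dbar (φ := fun z => φ (z + ζ)) (hφ.comp (by fun_prop))
    (hc.comp_homeomorph (Homeomorph.addRight ζ))
  rw [zero_add] at h
  rw [← h, ← integral_add_right_eq_self _ ζ]
  simp only [add_sub_cancel_right, dbar, fderiv_comp_add_right]

end CauchyPompeiu

lemma dbar_smul {c : ℂ → ℝ} {f : ℂ → ℂ} {z : ℂ} (hc : DifferentiableAt ℝ c z)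
    (hf : DifferentiableAt ℝ f z) :
    dbar (fun w => c w • f w) z = c z * dbar f z
      + ((fderiv ℝ c z 1 : ℝ) + Complex.I * (fderiv ℝ c z Complex.I : ℝ)) * f z := by
  unfold dbar
  rw [(hc.hasFDerivAt.fun_smul hf.hasFDerivAt).fderiv]
  simp only [add_apply, smul_apply,
    ContinuousLinearMap.smulRight_apply, Complex.real_smul]
  ring

lemma norm_dbar_smul_le {c : ℂ → ℝ} {f : ℂ → ℂ} {z : ℂ} (hc : DifferentiableAt ℝ c z)
    (hf : DifferentiableAt ℝ f z) :
    ‖dbar (fun w => c w • f w) z‖ ≤ |c z| * ‖dbar f z‖ + 2 * ‖fderiv ℝ c z‖ * ‖f z‖ := by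
  have hone := (fderiv ℝ c z).le_opNorm 1
  have hI := (fderiv ℝ c z).le_opNorm Complex.I
  simp only [norm_one, Complex.norm_I, mul_one] at hone hI
  rw [dbar_smul hc hf]
  refine (norm_add_le _ _).trans ?_
  rw [norm_mul, norm_mul, Complex.norm_real, Real.norm_eq_abs]
  gcongr
  refine (norm_add_le _ _).trans ?_
  rw [norm_mul, Complex.norm_I, Complex.norm_real, Complex.norm_real]
  linarith

lemma dbar_pow_mul {f : ℂ → ℂ} {z : ℂ} (k : ℕ) (hf : DifferentiableAt ℝ f z) :
    dbar (fun w => w ^ k * f w) z = z ^ k * dbar f z := by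
  have hpow := ((hasDerivAt_pow k z).hasFDerivAt.restrictScalars ℝ).mul hf.hasFDerivAt
  unfold dbar
  rw [show (fun w => w ^ k * f w) = (fun w : ℂ => w ^ k) * f from rfl, hpow.fderiv]
  simp only [add_apply, smul_apply, smul_eq_mul,
    ContinuousLinearMap.coe_restrictScalars', ContinuousLinearMap.toSpanSingleton_apply]
  linear_combination (f z * (k * z ^ (k - 1))) * Complex.I_sq

lemma dbar_congr {f g : ℂ → ℂ} {z : ℂ} (h : f =ᶠ[𝓝 z] g) :
    dbar f z = dbar g z := by
  unfold dbar
  rw [h.fderiv_eq]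

lemma measurable_dbar (f : ℂ → ℂ) : Measurable (dbar f) :=
  (measurable_fderiv_apply_const ℝ f 1).add
    ((measurable_fderiv_apply_const ℝ f Complex.I).const_mul _)

section Puncture

/-- A smooth cutoff that vanishes for `‖z‖ ≤ ε` and equals `1` for `2 * ε ≤ ‖z‖`; it removes a
neighbourhood of the puncture `0`. -/
def punctureCutoff (ε : ℝ) (z : ℂ) : ℝ :=
  1 - (⟨1, 2, one_pos, one_lt_two⟩ : ContDiffBump (0 : ℂ)) (ε⁻¹ • z)

variable {ε : ℝ} {z : ℂ}

lemma contDiff_punctureCutoff (ε : ℝ) : ContDiff ℝ 1 (punctureCutoff ε) :=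
  contDiff_const.sub ((ContDiffBump.contDiff _).comp (contDiff_const_smul _))

lemma abs_punctureCutoff_le_one (ε : ℝ) (z : ℂ) : |punctureCutoff ε z| ≤ 1 := by
  rw [punctureCutoff, abs_le]
  constructor <;> linarith [ContDiffBump.nonneg (c := (0 : ℂ)) ⟨1, 2, one_pos, one_lt_two⟩
    (x := ε⁻¹ • z), ContDiffBump.le_one (c := (0 : ℂ)) ⟨1, 2, one_pos, one_lt_two⟩ (x := ε⁻¹ • z)]

lemma punctureCutoff_eq_zero (hε : 0 < ε) (hz : ‖z‖ ≤ ε) : punctureCutoff ε z = 0 := by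
  rw [punctureCutoff, ContDiffBump.one_of_mem_closedBall, sub_self]
  simpa [norm_smul, abs_of_pos hε, inv_mul_le_iff₀ hε] using hz

lemma punctureCutoff_eq_one (hε : 0 < ε) (hz : 2 * ε ≤ ‖z‖) : punctureCutoff ε z = 1 := by
  rw [punctureCutoff, ContDiffBump.zero_of_le_dist, sub_zero]
  simpa [norm_smul, abs_of_pos hε, le_inv_mul_iff₀ hε, mul_comm] using hz

lemma punctureCutoff_eventuallyEq_one (hε : 0 < ε) (hz : 2 * ε < ‖z‖) :
    punctureCutoff ε =ᶠ[𝓝 z] fun _ => 1 :=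
  (continuousAt_const.eventually_lt continuous_norm.continuousAt hz).mono fun _ hw =>
    punctureCutoff_eq_one hε hw.le

lemma exists_norm_mul_fderiv_punctureCutoff_le :
    ∃ A, ∀ ε z, ‖z‖ * ‖fderiv ℝ (punctureCutoff ε) z‖ ≤ A := by
  set θ : ContDiffBump (0 : ℂ) := ⟨1, 2, one_pos, one_lt_two⟩
  have hθ : ContDiff ℝ 1 (θ : ℂ → ℝ) := θ.contDiff
  obtain ⟨A, hA⟩ : ∃ A, ∀ w : ℂ, ‖‖w‖ • fderiv ℝ θ w‖ ≤ A :=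
    ((θ.hasCompactSupport.fderiv ℝ).smul_left (f := fun w : ℂ => ‖w‖)).exists_bound_of_continuous
      (continuous_norm.smul (hθ.continuous_fderiv one_ne_zero))
  refine ⟨A, fun ε z => ?_⟩
  have hderiv : fderiv ℝ (punctureCutoff ε) z = -(ε⁻¹ • fderiv ℝ θ (ε⁻¹ • z)) := by
    have hcomp := fderiv_comp_smul (𝕜 := ℝ) (f := θ) ε⁻¹ (x := z)
    rw [show punctureCutoff ε = fun w => 1 - θ (ε⁻¹ • w) from rfl, fderiv_const_sub, hcomp]
  calc ‖z‖ * ‖fderiv ℝ (punctureCutoff ε) z‖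
      = ‖‖ε⁻¹ • z‖ • fderiv ℝ θ (ε⁻¹ • z)‖ := by
        rw [hderiv, norm_neg, norm_smul, norm_smul, norm_norm, norm_smul]
        ring
    _ ≤ A := hA _

variable {φ : ℂ → ℂ} {ζ : ℂ}

lemma contDiff_punctureCutoff_smul (hφ : ContDiffOn ℝ 1 φ {0}ᶜ) (hε : 0 < ε) :
    ContDiff ℝ 1 fun z => punctureCutoff ε z • φ z := by
  refine contDiff_iff_contDiffAt.2 fun z => ?_
  rcases eq_or_ne z 0 with rfl | hz
  · refine (contDiffAt_const (c := (0 : ℂ))).congr_of_eventuallyEq ?_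
    filter_upwards [ball_mem_nhds (0 : ℂ) hε] with w hw
    rw [punctureCutoff_eq_zero hε (by simpa using (mem_ball_zero_iff.1 hw).le), zero_smul]
  · exact (contDiff_punctureCutoff ε).contDiffAt.smul
      (hφ.contDiffAt (isOpen_compl_singleton.mem_nhds hz))

lemma punctureCutoff_smul_eventuallyEq (hε : 0 < ε) (hz : 2 * ε < ‖z‖) :
    (fun w => punctureCutoff ε w • φ w) =ᶠ[𝓝 z] φ :=
  (punctureCutoff_eventuallyEq_one hε hz).mono fun w hw => by simp only [hw, one_smul]

lemma norm_inv_sub_mul_dbar_punctureCutoff_smul_le {A : ℝ}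
    (hA : ∀ ε z, ‖z‖ * ‖fderiv ℝ (punctureCutoff ε) z‖ ≤ A) (hε : 0 < ε)
    (hεζ : 4 * ε ≤ ‖ζ‖) (hz : z ≠ 0) (hφ : DifferentiableAt ℝ φ z) :
    ‖(z - ζ)⁻¹ * dbar (fun w => punctureCutoff ε w • φ w) z‖
      ≤ ‖(z - ζ)⁻¹ * dbar φ z‖ + 4 * A / ‖ζ‖ * ‖z⁻¹ * φ z‖ := by
  have hz0 : 0 < ‖z‖ := norm_pos_iff.2 hz
  have hA0 : 0 ≤ A := (by positivity : 0 ≤ ‖z‖ * _).trans (hA ε z)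
  rcases lt_or_ge (2 * ε) ‖z‖ with hfar | hnear
  · rw [dbar_congr (punctureCutoff_smul_eventuallyEq hε hfar)]
    exact le_add_of_nonneg_right (by positivity)
  have hdist : ‖z - ζ‖⁻¹ ≤ 2 / ‖ζ‖ := by
    have hζ : 0 < ‖ζ‖ := by linarith
    have hsub : ‖ζ‖ / 2 ≤ ‖z - ζ‖ := by linarith [norm_sub_norm_le ζ z, norm_sub_rev ζ z]
    simpa using inv_anti₀ (by positivity) hsub
  have hfderiv : ‖fderiv ℝ (punctureCutoff ε) z‖ ≤ A * ‖z‖⁻¹ := by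
    rw [← div_eq_mul_inv, le_div_iff₀ hz0, mul_comm]
    exact hA ε z
  have hdbar := norm_dbar_smul_le ((contDiff_punctureCutoff ε).differentiable one_ne_zero z) hφ
  calc ‖(z - ζ)⁻¹ * dbar (fun w => punctureCutoff ε w • φ w) z‖
      ≤ ‖z - ζ‖⁻¹ * (1 * ‖dbar φ z‖ + 2 * (A * ‖z‖⁻¹) * ‖φ z‖) := by
        rw [norm_mul, norm_inv]
        gcongr
        refine hdbar.trans ?_
        gcongr
        exact abs_punctureCutoff_le_one ε z
    _ = ‖(z - ζ)⁻¹ * dbar φ z‖ + ‖z - ζ‖⁻¹ * (2 * A * (‖z‖⁻¹ * ‖φ z‖)) := by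
        rw [norm_mul, norm_inv]
        ring
    _ ≤ ‖(z - ζ)⁻¹ * dbar φ z‖ + 2 / ‖ζ‖ * (2 * A * (‖z‖⁻¹ * ‖φ z‖)) := by gcongr
    _ = ‖(z - ζ)⁻¹ * dbar φ z‖ + 4 * A / ‖ζ‖ * ‖z⁻¹ * φ z‖ := by
        rw [norm_mul z⁻¹, norm_inv]
        ring

theorem integral_inv_sub_mul_dbar_of_contDiffOn_compl_zero (hφ : ContDiffOn ℝ 1 φ {0}ᶜ)
    (hc : HasCompactSupport φ) (hζ : ζ ≠ 0) (hint : Integrable fun z => z⁻¹ * φ z)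
    (hint' : Integrable fun z => (z - ζ)⁻¹ * dbar φ z) :
    ∫ z, (z - ζ)⁻¹ * dbar φ z = -(2 * π) * φ ζ := by
  obtain ⟨A, hA⟩ := exists_norm_mul_fderiv_punctureCutoff_le
  have hpos : ∀ᶠ ε : ℝ in 𝓝[>] 0, 0 < ε := eventually_mem_nhdsWithin
  have hsmall : ∀ c > 0, ∀ᶠ ε : ℝ in 𝓝[>] 0, ε < c := fun c hc =>
    eventually_nhdsWithin_of_eventually_nhds (eventually_lt_nhds hc)
  have heq : ∀ z ≠ 0, ∀ᶠ ε : ℝ in 𝓝[>] 0, (fun w => punctureCutoff ε w • φ w) =ᶠ[𝓝 z] φ := by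
    intro z hz
    filter_upwards [hpos, hsmall (‖z‖ / 2) (by positivity)] with ε hε hεz
    exact punctureCutoff_smul_eventuallyEq hε (by linarith)
  have hne : ∀ᵐ z : ℂ, z ≠ 0 := Measure.ae_ne volume 0
  have hlim_left : Tendsto (fun ε : ℝ =>
      ∫ z, (z - ζ)⁻¹ * dbar (fun w => punctureCutoff ε w • φ w) z) (𝓝[>] 0)
      (𝓝 (∫ z, (z - ζ)⁻¹ * dbar φ z)) := by
    refine tendsto_integral_filter_of_dominated_convergence
      (fun z => ‖(z - ζ)⁻¹ * dbar φ z‖ + 4 * A / ‖ζ‖ * ‖z⁻¹ * φ z‖) ?_ ?_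
      (hint'.norm.add (hint.norm.const_mul _)) ?_
    · exact Eventually.of_forall fun ε =>
        (Measurable.mul (by fun_prop) (measurable_dbar _)).aestronglyMeasurable
    · filter_upwards [hpos, hsmall (‖ζ‖ / 4) (by positivity)] with ε hε hεζ
      filter_upwards [hne] with z hz
      exact norm_inv_sub_mul_dbar_punctureCutoff_smul_le hA hε (by linarith) hz
        ((hφ.contDiffAt (isOpen_compl_singleton.mem_nhds hz)).differentiableAt one_ne_zero)
    · filter_upwards [hne] with z hz
      exact tendsto_const_nhds.congr' ((heq z hz).mono fun ε h => by
        simp only [dbar_congr h])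
  have hlim_right : Tendsto (fun ε : ℝ =>
      ∫ z, (z - ζ)⁻¹ * dbar (fun w => punctureCutoff ε w • φ w) z) (𝓝[>] 0)
      (𝓝 (-(2 * π) * φ ζ)) := by
    refine tendsto_const_nhds.congr' ?_
    filter_upwards [hpos, heq ζ hζ] with ε hε h
    have hsupp : HasCompactSupport fun z => punctureCutoff ε z • φ z :=
      hc.smul_left (f := punctureCutoff ε)
    rw [integral_inv_sub_mul_dbar (contDiff_punctureCutoff_smul hφ hε) hsupp ζ, h.eq_of_nhds]
  exact tendsto_nhds_unique hlim_left hlim_right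

end Puncture

section CauchyTransform

lemma rpow_neg_mul_rpow_neg_le {x y α β : ℝ} (hx : 0 < x) (hy : 0 < y) (hα : 0 ≤ α)
    (hβ : 0 ≤ β) : x ^ (-α) * y ^ (-β) ≤ x ^ (-(α + β)) + y ^ (-(α + β)) := by
  rcases le_total x y with hxy | hyx
  · calc x ^ (-α) * y ^ (-β) ≤ x ^ (-α) * x ^ (-β) := by
          gcongr ?_ * ?_
          exact rpow_le_rpow_of_nonpos hx hxy (by linarith)
      _ = x ^ (-(α + β)) := by rw [← rpow_add hx, neg_add]
      _ ≤ _ := le_add_of_nonneg_right (by positivity)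
  · calc x ^ (-α) * y ^ (-β) ≤ y ^ (-α) * y ^ (-β) := by
          gcongr ?_ * ?_
          exact rpow_le_rpow_of_nonpos hy hyx (by linarith)
      _ = y ^ (-(α + β)) := by rw [← rpow_add hy, neg_add]
      _ ≤ _ := le_add_of_nonneg_left (by positivity)

lemma rpow_mul_inv_le_of_le_add {x y w η η' : ℝ} (hx : 0 < x) (hy : 0 < y) (hw : 0 < w)
    (hwxy : w ≤ x + y) (hη' : 0 < η') (hlt : η' < η) (hη : η ≤ 1) :
    x ^ (η - 2) * y⁻¹
      ≤ w ^ (η' - 1) * (2 * (x ^ (-(2 - (η - η'))) + y ^ (-(2 - (η - η'))))) := by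
  have hsub : w ^ (1 - η') ≤ x ^ (1 - η') + y ^ (1 - η') :=
    (rpow_le_rpow hw.le hwxy (by linarith)).trans
      (rpow_add_le_add_rpow hx.le hy.le (by linarith) (by linarith))
  have hfst : x ^ (1 - η') * (x ^ (η - 2) * y⁻¹)
      ≤ x ^ (-(2 - (η - η'))) + y ^ (-(2 - (η - η'))) := by
    have h := rpow_neg_mul_rpow_neg_le (α := 1 - (η - η')) hx hy (by linarith) zero_le_one
    rw [rpow_neg_one, show 1 - (η - η') + 1 = 2 - (η - η') by ring] at h
    rwa [← mul_assoc, ← rpow_add hx, show 1 - η' + (η - 2) = -(1 - (η - η')) by ring]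
  have hsnd : y ^ (1 - η') * (x ^ (η - 2) * y⁻¹)
      ≤ x ^ (-(2 - (η - η'))) + y ^ (-(2 - (η - η'))) := by
    have h := rpow_neg_mul_rpow_neg_le (α := 2 - η) (β := η') hx hy (by linarith) hη'.le
    rw [show 2 - η + η' = 2 - (η - η') by ring] at h
    rwa [← rpow_neg_one y, mul_left_comm, ← rpow_add hy, show 1 - η' + -1 = -η' by ring,
      show η - 2 = -(2 - η) by ring]
  calc x ^ (η - 2) * y⁻¹ = w ^ (η' - 1) * (w ^ (1 - η') * (x ^ (η - 2) * y⁻¹)) := by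
        rw [← mul_assoc, ← rpow_add hw, show η' - 1 + (1 - η') = 0 by ring, rpow_zero, one_mul]
    _ ≤ w ^ (η' - 1) * ((x ^ (1 - η') + y ^ (1 - η')) * (x ^ (η - 2) * y⁻¹)) := by gcongr
    _ ≤ _ := by
        refine mul_le_mul_of_nonneg_left ?_ (by positivity)
        rw [add_mul]
        linarith

/-- The kernel `‖z‖ ^ (-α)` on `ℂ` truncated to the ball of radius `r`. -/
def truncatedRieszKernel (α r : ℝ) : ℂ → ℝ := (ball 0 r).indicator fun z => ‖z‖ ^ (-α)

lemma truncatedRieszKernel_nonneg (α r : ℝ) (z : ℂ) : 0 ≤ truncatedRieszKernel α r z :=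
  Set.indicator_nonneg (fun _ _ => by positivity) z

lemma truncatedRieszKernel_of_norm_lt {α r : ℝ} {z : ℂ} (hz : ‖z‖ < r) :
    truncatedRieszKernel α r z = ‖z‖ ^ (-α) :=
  Set.indicator_of_mem (mem_ball_zero_iff.2 hz) _

lemma integrable_truncatedRieszKernel {α : ℝ} (hα : α < 2) (r : ℝ) :
    Integrable (truncatedRieszKernel α r) := by
  refine (integrable_indicator_iff measurableSet_ball).2
    (integrableOn_ball_of_norm_le_rpow (C := 1) (α := α) (by simp) (by simpa using hα) ?_
      (Measurable.aestronglyMeasurable (by fun_prop)))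
  exact Eventually.of_forall fun z => by rw [one_mul, Real.norm_of_nonneg (by positivity)]

/-- The Cauchy transform `ζ ↦ ∫ g(z) / (z - ζ) dz` with respect to area. -/
def cauchyTransform (g : ℂ → ℂ) (ζ : ℂ) : ℂ := ∫ z, (z - ζ)⁻¹ * g z

variable {g : ℂ → ℂ} {r η C : ℝ}

lemma integrable_inv_mul_of_norm_le_rpow (hg : Measurable g) (hg0 : ∀ z, r < ‖z‖ → g z = 0)
    (hgC : ∀ z ≠ 0, ‖g z‖ ≤ C * ‖z‖ ^ (η - 1)) (hη : 0 < η) :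
    Integrable fun z => z⁻¹ * g z := by
  refine ((integrable_truncatedRieszKernel (α := 2 - η) (by linarith) (r + 1)).const_mul C).mono'
    (measurable_id.inv.mul hg).aestronglyMeasurable ?_
  have hne : ∀ᵐ z : ℂ, z ≠ 0 := Measure.ae_ne volume 0
  filter_upwards [hne] with z hz
  have hz0 : 0 < ‖z‖ := norm_pos_iff.2 hz
  have hC : 0 ≤ C := nonneg_of_mul_nonneg_left ((norm_nonneg _).trans (hgC z hz)) (by positivity)
  rcases lt_or_ge r ‖z‖ with hfar | hnear
  · rw [hg0 z hfar, mul_zero, norm_zero]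
    exact mul_nonneg hC (truncatedRieszKernel_nonneg _ _ _)
  · rw [truncatedRieszKernel_of_norm_lt (by linarith), norm_mul, norm_inv]
    calc ‖z‖⁻¹ * ‖g z‖ ≤ ‖z‖⁻¹ * (C * ‖z‖ ^ (η - 1)) := by gcongr; exact hgC z hz
      _ = C * ‖z‖ ^ (-(2 - η)) := by
        rw [← rpow_neg_one, mul_left_comm, ← rpow_add hz0]
        ring_nf

variable {η' : ℝ} {ζ : ℂ}

lemma norm_cauchyKernel_sub_mul_le (hg0 : ∀ z, r < ‖z‖ → g z = 0)
    (hgC : ∀ z ≠ 0, ‖g z‖ ≤ C * ‖z‖ ^ (η - 1)) (hη' : 0 < η') (hlt : η' < η) (hη : η ≤ 1)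
    (hζ : ζ ≠ 0) (hζr : ‖ζ‖ < r) {z : ℂ} (hz : z ≠ 0) (hzζ : z ≠ ζ) :
    ‖((z - ζ)⁻¹ - z⁻¹) * g z‖ ≤ 2 * C * ‖ζ‖ ^ η' *
      (truncatedRieszKernel (2 - (η - η')) (2 * r) z
        + truncatedRieszKernel (2 - (η - η')) (2 * r) (z - ζ)) := by
  have hz0 : 0 < ‖z‖ := norm_pos_iff.2 hz
  have hζ0 : 0 < ‖ζ‖ := norm_pos_iff.2 hζ
  have hzζ0 : 0 < ‖z - ζ‖ := norm_pos_iff.2 (sub_ne_zero.2 hzζ)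
  have hC : 0 ≤ C := nonneg_of_mul_nonneg_left ((norm_nonneg _).trans (hgC z hz)) (by positivity)
  rcases lt_or_ge r ‖z‖ with hfar | hnear
  · rw [hg0 z hfar, mul_zero, norm_zero]
    exact mul_nonneg (by positivity) (add_nonneg (truncatedRieszKernel_nonneg _ _ _)
      (truncatedRieszKernel_nonneg _ _ _))
  rw [truncatedRieszKernel_of_norm_lt (by linarith),
    truncatedRieszKernel_of_norm_lt ((norm_sub_le z ζ).trans_lt (by linarith))]
  have hkernel := rpow_mul_inv_le_of_le_add hz0 hzζ0 hζ0
    (by simpa using norm_sub_le z (z - ζ)) hη' hlt hη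
  have hdiff : (z - ζ)⁻¹ - z⁻¹ = ζ * (z⁻¹ * (z - ζ)⁻¹) := by
    have := sub_ne_zero.2 hzζ
    field_simp
    ring
  calc ‖((z - ζ)⁻¹ - z⁻¹) * g z‖ = ‖ζ‖ * (‖z‖⁻¹ * ‖z - ζ‖⁻¹ * ‖g z‖) := by
        rw [hdiff, norm_mul, norm_mul, norm_mul, norm_inv, norm_inv, mul_assoc]
    _ ≤ ‖ζ‖ * (‖z‖⁻¹ * ‖z - ζ‖⁻¹ * (C * ‖z‖ ^ (η - 1))) := by gcongr; exact hgC z hz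
    _ = ‖ζ‖ * C * (‖z‖ ^ (η - 2) * ‖z - ζ‖⁻¹) := by
        rw [show η - 2 = -1 + (η - 1) by ring, rpow_add hz0, rpow_neg_one]
        ring
    _ ≤ ‖ζ‖ * C * (‖ζ‖ ^ (η' - 1)
        * (2 * (‖z‖ ^ (-(2 - (η - η'))) + ‖z - ζ‖ ^ (-(2 - (η - η')))))) := by gcongr
    _ = _ := by
        have hpow : ‖ζ‖ ^ η' = ‖ζ‖ * ‖ζ‖ ^ (η' - 1) := by
          rw [← rpow_one_add' hζ0.le (by linarith), add_sub_cancel]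
        rw [hpow]
        ring

lemma integrable_truncatedRieszKernel_add_comp_sub {α : ℝ} (hα : α < 2) (r : ℝ) (ζ : ℂ) :
    Integrable fun z => truncatedRieszKernel α r z + truncatedRieszKernel α r (z - ζ) :=
  (integrable_truncatedRieszKernel hα r).add
    ((integrable_truncatedRieszKernel hα r).comp_sub_right ζ)

lemma integrable_cauchyKernel_sub_mul (hg : Measurable g) (hg0 : ∀ z, r < ‖z‖ → g z = 0)
    (hgC : ∀ z ≠ 0, ‖g z‖ ≤ C * ‖z‖ ^ (η - 1)) (hη0 : 0 < η) (hη : η ≤ 1)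
    (hζ : ζ ≠ 0) (hζr : ‖ζ‖ < r) : Integrable fun z => ((z - ζ)⁻¹ - z⁻¹) * g z := by
  have hne : ∀ᵐ z : ℂ, z ≠ 0 ∧ z ≠ ζ :=
    (Measure.ae_ne volume 0).and (Measure.ae_ne volume ζ)
  refine ((integrable_truncatedRieszKernel_add_comp_sub (α := 2 - (η - η / 2)) (by linarith)
    (2 * r) ζ).const_mul (2 * C * ‖ζ‖ ^ (η / 2))).mono'
    ((Measurable.mul (by fun_prop) hg).aestronglyMeasurable) (hne.mono fun z hz => ?_)
  exact norm_cauchyKernel_sub_mul_le hg0 hgC (half_pos hη0) (half_lt_self hη0) hη hζ hζr hz.1 hz.2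

lemma integrable_inv_sub_mul_of_norm_le_rpow (hg : Measurable g) (hg0 : ∀ z, r < ‖z‖ → g z = 0)
    (hgC : ∀ z ≠ 0, ‖g z‖ ≤ C * ‖z‖ ^ (η - 1)) (hη0 : 0 < η) (hη : η ≤ 1)
    (hζ : ζ ≠ 0) (hζr : ‖ζ‖ < r) : Integrable fun z => (z - ζ)⁻¹ * g z :=
  ((integrable_cauchyKernel_sub_mul hg hg0 hgC hη0 hη hζ hζr).add
    (integrable_inv_mul_of_norm_le_rpow hg hg0 hgC hη0)).congr
    (Eventually.of_forall fun z => by simp only [Pi.add_apply]; ring)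

theorem norm_cauchyTransform_sub_le (hg : Measurable g) (hg0 : ∀ z, r < ‖z‖ → g z = 0)
    (hgC : ∀ z ≠ 0, ‖g z‖ ≤ C * ‖z‖ ^ (η - 1)) (hη' : 0 < η') (hlt : η' < η) (hη : η ≤ 1)
    (hζ : ζ ≠ 0) (hζr : ‖ζ‖ < r) :
    ‖cauchyTransform g ζ - cauchyTransform g 0‖
      ≤ 4 * C * (∫ z, truncatedRieszKernel (2 - (η - η')) (2 * r) z) * ‖ζ‖ ^ η' := by
  have hη0 : 0 < η := hη'.trans hlt
  have hα : 2 - (η - η') < 2 := by linarith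
  have hne : ∀ᵐ z : ℂ, z ≠ 0 ∧ z ≠ ζ :=
    (Measure.ae_ne volume 0).and (Measure.ae_ne volume ζ)
  have hdiff : cauchyTransform g ζ - cauchyTransform g 0 = ∫ z, ((z - ζ)⁻¹ - z⁻¹) * g z := by
    simp only [cauchyTransform, sub_zero, sub_mul]
    exact (integral_sub (integrable_inv_sub_mul_of_norm_le_rpow hg hg0 hgC hη0 hη hζ hζr)
      (integrable_inv_mul_of_norm_le_rpow hg hg0 hgC hη0)).symm
  rw [hdiff]
  calc ‖∫ z, ((z - ζ)⁻¹ - z⁻¹) * g z‖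
      ≤ ∫ z, 2 * C * ‖ζ‖ ^ η' * (truncatedRieszKernel (2 - (η - η')) (2 * r) z
          + truncatedRieszKernel (2 - (η - η')) (2 * r) (z - ζ)) :=
        norm_integral_le_of_norm_le
          ((integrable_truncatedRieszKernel_add_comp_sub hα (2 * r) ζ).const_mul _)
          (hne.mono fun z hz =>
            norm_cauchyKernel_sub_mul_le hg0 hgC hη' hlt hη hζ hζr hz.1 hz.2)
    _ = 4 * C * (∫ z, truncatedRieszKernel (2 - (η - η')) (2 * r) z) * ‖ζ‖ ^ η' := by
        have hK := integrable_truncatedRieszKernel hα (2 * r)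
        rw [integral_const_mul, integral_add hK (hK.comp_sub_right ζ),
          integral_sub_right_eq_self]
        ring

end CauchyTransform

section IsolatedSingularity

variable {r η C : ℝ}

lemma eventuallyEq_zero_of_lt_norm {f : ℂ → ℂ} (hf : ∀ z, r < ‖z‖ → f z = 0) {z : ℂ}
    (hz : r < ‖z‖) : f =ᶠ[𝓝 z] fun _ => 0 :=
  (continuousAt_const.eventually_lt continuous_norm.continuousAt hz).mono hf

lemma dbar_eq_zero_of_lt_norm {f : ℂ → ℂ} (hf : ∀ z, r < ‖z‖ → f z = 0) {z : ℂ}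
    (hz : r < ‖z‖) : dbar f z = 0 := by
  rw [dbar_congr (eventuallyEq_zero_of_lt_norm hf hz)]
  simp [dbar]

lemma eq_cauchyTransform_dbar {φ : ℂ → ℂ} (hφ : ContDiffOn ℝ 1 φ {0}ᶜ)
    (hφ0 : ∀ z, r < ‖z‖ → φ z = 0) (hφC : ∀ z ≠ 0, ‖φ z‖ ≤ C * ‖z‖ ^ (η - 1))
    (hdφC : ∀ z ≠ 0, ‖dbar φ z‖ ≤ C * ‖z‖ ^ (η - 1)) (hη0 : 0 < η) (hη : η ≤ 1) {ζ : ℂ}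
    (hζ : ζ ≠ 0) (hζr : ‖ζ‖ < r) : φ ζ = -(2 * π : ℂ)⁻¹ * cauchyTransform (dbar φ) ζ := by
  have hc : HasCompactSupport φ :=
    HasCompactSupport.of_support_subset_isCompact (isCompact_closedBall (0 : ℂ) r) fun z hz =>
      mem_closedBall_zero_iff.2 (le_of_not_gt fun h => hz (hφ0 z h))
  have hmeas : Measurable φ := measurable_of_continuousOn_compl_singleton 0 hφ.continuousOn
  have hrep := integral_inv_sub_mul_dbar_of_contDiffOn_compl_zero hφ hc hζ
    (integrable_inv_mul_of_norm_le_rpow hmeas hφ0 hφC hη0)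
    (integrable_inv_sub_mul_of_norm_le_rpow (measurable_dbar φ)
      (fun z hz => dbar_eq_zero_of_lt_norm hφ0 hz) hdφC hη0 hη hζ hζr)
  have hπ : (π : ℂ) ≠ 0 := Complex.ofReal_ne_zero.2 pi_ne_zero
  rw [cauchyTransform, hrep]
  field_simp

lemma exists_norm_sub_le_rpow_of_eq_zero {φ : ℂ → ℂ} (hφ : ContDiffOn ℝ 1 φ {0}ᶜ)
    (hφ0 : ∀ z, r < ‖z‖ → φ z = 0) (hφC : ∀ z ≠ 0, ‖φ z‖ ≤ C * ‖z‖ ^ (η - 1))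
    (hdφC : ∀ z ≠ 0, ‖dbar φ z‖ ≤ C * ‖z‖ ^ (η - 1)) (hη : η ≤ 1) :
    ∃ c : ℂ, ∀ η', 0 < η' → η' < η →
      ∃ K, ∀ z ≠ 0, ‖z‖ < r → ‖φ z - c‖ ≤ K * ‖z‖ ^ η' := by
  refine ⟨-(2 * π : ℂ)⁻¹ * cauchyTransform (dbar φ) 0, fun η' hη' hlt => ?_⟩
  refine ⟨‖-(2 * π : ℂ)⁻¹‖ * (4 * C * ∫ z, truncatedRieszKernel (2 - (η - η')) (2 * r) z),
    fun z hz hzr => ?_⟩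
  rw [eq_cauchyTransform_dbar hφ hφ0 hφC hdφC (hη'.trans hlt) hη hz hzr, ← mul_sub, norm_mul,
    mul_assoc ‖_‖]
  gcongr
  exact norm_cauchyTransform_sub_le (measurable_dbar φ)
    (fun z hz => dbar_eq_zero_of_lt_norm hφ0 hz) hdφC hη' hlt hη hz hzr

lemma exists_contDiff_cutoff (hr : 0 < r) :
    ∃ (χ : ℂ → ℝ) (B : ℝ), ContDiff ℝ 1 χ ∧ (∀ z, |χ z| ≤ 1) ∧ (∀ z, ‖fderiv ℝ χ z‖ ≤ B) ∧
      (∀ z, ‖z‖ < r / 4 → χ z = 1) ∧ ∀ z, r / 2 < ‖z‖ → χ z = 0 := by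
  let χ : ContDiffBump (0 : ℂ) := ⟨r / 4, r / 2, by linarith, by linarith⟩
  have hχ : ContDiff ℝ 1 (χ : ℂ → ℝ) := χ.contDiff
  obtain ⟨B, hB⟩ : ∃ B, ∀ w : ℂ, ‖fderiv ℝ χ w‖ ≤ B :=
    (χ.hasCompactSupport.fderiv ℝ).exists_bound_of_continuous (hχ.continuous_fderiv one_ne_zero)
  refine ⟨χ, B, hχ, fun z => ?_, hB, fun z hz => ?_, fun z hz => ?_⟩
  · rw [abs_of_nonneg χ.nonneg]
    exact χ.le_one
  · exact χ.one_of_mem_closedBall (by simpa using hz.le)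
  · exact χ.zero_of_le_dist (by simpa using hz.le)

lemma exists_extension_of_norm_le {U : ℂ → ℂ} {g : ℂ → ℝ} (hr : 0 < r)
    (hU : ContDiffOn ℝ 1 U (ball 0 r \ {0})) (hg : ∀ z, 0 ≤ g z)
    (hUg : ∀ z ≠ 0, ‖z‖ < r → ‖U z‖ ≤ g z) (hdUg : ∀ z ≠ 0, ‖z‖ < r → ‖dbar U z‖ ≤ g z) :
    ∃ (φ : ℂ → ℂ) (B : ℝ), ContDiffOn ℝ 1 φ {0}ᶜ ∧ (∀ z, r / 2 < ‖z‖ → φ z = 0) ∧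
      (∀ z, ‖z‖ < r / 4 → φ z = U z) ∧ (∀ z ≠ 0, ‖φ z‖ ≤ B * g z) ∧
      ∀ z ≠ 0, ‖dbar φ z‖ ≤ B * g z := by
  obtain ⟨χ, B, hχ, hχ_le, hB, hχ_one, hχ_zero⟩ := exists_contDiff_cutoff hr
  have hB0 : 0 ≤ B := (norm_nonneg _).trans (hB 0)
  have hU_at : ∀ z ≠ 0, ‖z‖ < r → ContDiffAt ℝ 1 U z := fun z hz hzr =>
    hU.contDiffAt ((isOpen_ball.sdiff isClosed_singleton).mem_nhds
      ⟨mem_ball_zero_iff.2 hzr, hz⟩)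
  have hzero : ∀ z, r / 2 < ‖z‖ → χ z • U z = 0 := fun z hz => by rw [hχ_zero z hz, zero_smul]
  refine ⟨fun z => χ z • U z, 1 + 2 * B, fun z hz => ?_, hzero,
    fun z hz => by simp only [hχ_one z hz, one_smul], fun z hz => ?_, fun z hz => ?_⟩
  all_goals rcases lt_or_ge (r / 2) ‖z‖ with hfar | hnear
  · exact (contDiffAt_const.congr_of_eventuallyEq
      (eventuallyEq_zero_of_lt_norm hzero hfar)).contDiffWithinAt
  · exact (hχ.contDiffAt.smul (hU_at z hz (by linarith))).contDiffWithinAt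
  · simpa only [hzero z hfar, norm_zero] using mul_nonneg (by positivity) (hg z)
  · rw [norm_smul]
    exact mul_le_mul ((hχ_le z).trans (by linarith)) (hUg z hz (by linarith)) (norm_nonneg _)
      (by positivity)
  · simpa only [dbar_eq_zero_of_lt_norm hzero hfar, norm_zero]
      using mul_nonneg (by positivity) (hg z)
  · calc ‖dbar (fun z => χ z • U z) z‖
        ≤ |χ z| * ‖dbar U z‖ + 2 * ‖fderiv ℝ χ z‖ * ‖U z‖ :=
          norm_dbar_smul_le (hχ.differentiable one_ne_zero z)
            ((hU_at z hz (by linarith)).differentiableAt one_ne_zero)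
      _ ≤ 1 * g z + 2 * B * g z := by
          gcongr
          exacts [hχ_le z, hdUg z hz (by linarith), hB z, hUg z hz (by linarith)]
      _ = (1 + 2 * B) * g z := by ring

theorem exists_norm_sub_le_rpow {U : ℂ → ℂ} (hr : 0 < r)
    (hU : ContDiffOn ℝ 1 U (ball 0 r \ {0}))
    (hUC : ∀ z ≠ 0, ‖z‖ < r → ‖U z‖ ≤ C * ‖z‖ ^ (η - 1))
    (hdUC : ∀ z ≠ 0, ‖z‖ < r → ‖dbar U z‖ ≤ C * ‖z‖ ^ (η - 1)) (hη : η ≤ 1) :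
    ∃ c : ℂ, ∀ η', 0 < η' → η' < η →
      ∃ K, ∀ z ≠ 0, ‖z‖ < r / 4 → ‖U z - c‖ ≤ K * ‖z‖ ^ η' := by
  have hC : ∀ z : ℂ, C * ‖z‖ ^ (η - 1) ≤ |C| * ‖z‖ ^ (η - 1) := fun z => by
    gcongr
    exact le_abs_self C
  obtain ⟨φ, B, hφ, hφ0, hφU, hφC, hdφC⟩ := exists_extension_of_norm_le
    (g := fun z => |C| * ‖z‖ ^ (η - 1)) hr hU (fun z => by positivity)
    (fun z hz hzr => (hUC z hz hzr).trans (hC z)) (fun z hz hzr => (hdUC z hz hzr).trans (hC z))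
  simp only [← mul_assoc] at hφC hdφC
  obtain ⟨c, hc⟩ := exists_norm_sub_le_rpow_of_eq_zero hφ hφ0 hφC hdφC hη
  refine ⟨c, fun η' hη' hlt => (hc η' hη' hlt).imp fun K hK z hz hzr => ?_⟩
  simpa only [hφU z hzr] using hK z hz (by linarith [norm_nonneg z])

theorem exists_norm_sub_div_pow_le_rpow {W : ℂ → ℂ} (k : ℕ) (hr : 0 < r)
    (hW : ContDiffOn ℝ 1 W (ball 0 r \ {0}))
    (hWC : ∀ z ≠ 0, ‖z‖ < r → ‖W z‖ ≤ C * ‖z‖ ^ (η - 1 - k))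
    (hdWC : ∀ z ≠ 0, ‖z‖ < r → ‖dbar W z‖ ≤ C * ‖z‖ ^ (η - 1 - k)) (hη : η ≤ 1) :
    ∃ c : ℂ, ∀ η', 0 < η' → η' < η →
      ∃ K, ∀ z ≠ 0, ‖z‖ < r / 4 → ‖W z - c / z ^ k‖ ≤ K * ‖z‖ ^ (η' - k) := by
  have hbound : ∀ {v : ℂ} {z : ℂ}, z ≠ 0 → ‖v‖ ≤ C * ‖z‖ ^ (η - 1 - k) →
      ‖z ^ k * v‖ ≤ C * ‖z‖ ^ (η - 1) := fun {v z} hz hv => by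
    have hz0 : 0 < ‖z‖ := norm_pos_iff.2 hz
    calc ‖z ^ k * v‖ ≤ ‖z‖ ^ k * (C * ‖z‖ ^ (η - 1 - k)) := by
          rw [norm_mul, norm_pow]
          gcongr
      _ = C * ‖z‖ ^ (η - 1) := by
          rw [mul_left_comm, ← rpow_natCast, ← rpow_add hz0, add_sub_cancel]
  have hpow : ContDiff ℝ 1 fun z : ℂ => z ^ k := contDiff_id.pow k
  obtain ⟨c, hc⟩ := exists_norm_sub_le_rpow (U := fun z => z ^ k * W z) hr
    (hpow.contDiffOn.mul hW) (fun z hz hzr => hbound hz (hWC z hz hzr)) (fun z hz hzr => by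
      have hWz : DifferentiableAt ℝ W z := (hW.contDiffAt ((isOpen_ball.sdiff
        isClosed_singleton).mem_nhds ⟨mem_ball_zero_iff.2 hzr, hz⟩)).differentiableAt one_ne_zero
      rw [dbar_pow_mul k hWz]
      exact hbound hz (hdWC z hz hzr)) hη
  refine ⟨c, fun η' hη' hlt => (hc η' hη' hlt).imp fun K hK z hz hzr => ?_⟩
  have hz0 : 0 < ‖z‖ := norm_pos_iff.2 hz
  calc ‖W z - c / z ^ k‖ = ‖z ^ k * W z - c‖ / ‖z‖ ^ k := by
        rw [← norm_pow, ← norm_div, sub_div, mul_div_cancel_left₀ _ (pow_ne_zero k hz)]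
    _ ≤ K * ‖z‖ ^ η' / ‖z‖ ^ k := by gcongr; exact hK z hz hzr
    _ = K * ‖z‖ ^ (η' - k) := by rw [rpow_sub hz0, rpow_natCast, mul_div_assoc]

end IsolatedSingularity

section GradientEstimate

open InnerProductSpace Laplacian

variable {E : Type*} [NormedAddCommGroup E] [InnerProductSpace ℝ E]

lemma deriv_deriv_nonpos_of_isLocalMax {g : ℝ → ℝ} {t : ℝ} (hg : ContinuousAt g t)
    (h : IsLocalMax g t) : deriv (deriv g) t ≤ 0 := by
  by_contra! hpos
  have hconst : g =ᶠ[𝓝 t] fun _ => g t :=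
    (h.and (isLocalMin_of_deriv_deriv_pos hpos h.deriv_eq_zero hg)).mono fun _ hs =>
      le_antisymm hs.1 hs.2
  have hderiv : deriv g =ᶠ[𝓝 t] fun _ => 0 := by simpa using hconst.deriv
  simp [hderiv.deriv_eq] at hpos

lemma deriv_deriv_comp_line {f : E → ℝ} {x : E} (hf : ContDiffAt ℝ 2 f x) (v : E) :
    deriv (deriv fun t : ℝ => f (x + t • v)) 0 = fderiv ℝ (fderiv ℝ f) x v v := by
  have hline : ∀ t : ℝ, HasDerivAt (fun t : ℝ => x + t • v) v t := fun t => by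
    simpa using ((hasDerivAt_id t).smul_const v).const_add x
  have hx : x + (0 : ℝ) • v = x := by simp
  have hcont : Tendsto (fun t : ℝ => x + t • v) (𝓝 0) (𝓝 x) := by
    simpa only [hx] using (hline 0).continuousAt.tendsto
  have hfirst : deriv (fun t : ℝ => f (x + t • v)) =ᶠ[𝓝 0]
      fun t => fderiv ℝ f (x + t • v) v :=
    (hcont.eventually (hf.eventually (by simp))).mono fun t ht =>
      ((ht.differentiableAt two_ne_zero).hasFDerivAt.comp_hasDerivAt t (hline t)).deriv
  have hsecond : HasFDerivAt (fderiv ℝ f) (fderiv ℝ (fderiv ℝ f) x) (x + (0 : ℝ) • v) := by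
    rw [hx]
    exact ((hf.fderiv_right (m := 1) (by norm_num)).differentiableAt one_ne_zero).hasFDerivAt
  have hpath : HasDerivAt (fun t : ℝ => fderiv ℝ f (x + t • v))
      (fderiv ℝ (fderiv ℝ f) x v) 0 := hsecond.comp_hasDerivAt (0 : ℝ) (hline 0)
  rw [hfirst.deriv_eq]
  simpa using (hpath.clm_apply (hasDerivAt_const (0 : ℝ) v)).deriv

lemma fderiv_fderiv_nonpos_of_isLocalMax {f : E → ℝ} {x : E} (hf : ContDiffAt ℝ 2 f x)
    (h : IsLocalMax f x) (v : E) : fderiv ℝ (fderiv ℝ f) x v v ≤ 0 := by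
  have hx : x + (0 : ℝ) • v = x := by simp
  have hline : ContinuousAt (fun t : ℝ => x + t • v) 0 := by fun_prop
  rw [← deriv_deriv_comp_line hf v]
  refine deriv_deriv_nonpos_of_isLocalMax ?_ ?_
  · exact ContinuousAt.comp (by rw [hx]; exact hf.continuousAt) hline
  · have hline' : Tendsto (fun t : ℝ => x + t • v) (𝓝 0) (𝓝 x) := by
      simpa only [hx] using hline.tendsto
    simpa only [IsLocalMax, IsMaxFilter, hx] using hline'.eventually h

lemma contDiffAt_half_sub_comp_isometry {u : E → ℝ} {x₀ : E} {L : E ≃ₗᵢ[ℝ] E} {x : E}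
    (hu : ContDiffAt ℝ 2 u (x₀ + x)) (huL : ContDiffAt ℝ 2 u (x₀ + L x)) :
    ContDiffAt ℝ 2 (fun y => (2⁻¹ : ℝ) • (u (x₀ + y) - u (x₀ + L y))) x :=
  ((hu.comp x (by fun_prop)).sub (huL.comp x (by fun_prop))).const_smul _

/-- The quadratic comparison function `α|x|² + k⟪e, x⟫(d - ⟪e, x⟫)` of the gradient estimate. -/
def barrier (e : E) (α k d : ℝ) (x : E) : ℝ :=
  α * ‖x‖ ^ 2 + k * (inner ℝ e x * (d - inner ℝ e x))

lemma contDiff_barrier (e : E) (α k d : ℝ) : ContDiff ℝ 2 (barrier e α k d) :=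
  have hinner : ContDiff ℝ 2 fun x : E => inner ℝ e x := contDiff_const.inner ℝ contDiff_id
  (contDiff_const.mul (contDiff_norm_sq ℝ)).add
    (contDiff_const.mul (hinner.mul (contDiff_const.sub hinner)))

variable [FiniteDimensional ℝ E]

lemma laplacian_eq_sum_fderiv_fderiv {ι : Type*} [Fintype ι] (b : OrthonormalBasis ι ℝ E)
    (f : E → ℝ) (x : E) : Δ f x = ∑ i, fderiv ℝ (fderiv ℝ f) x (b i) (b i) := by
  simp [laplacian_eq_iteratedFDeriv_orthonormalBasis f b, iteratedFDeriv_two_apply]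

lemma laplacian_nonpos_of_isLocalMax {f : E → ℝ} {x : E} (hf : ContDiffAt ℝ 2 f x)
    (h : IsLocalMax f x) : Δ f x ≤ 0 := by
  rw [laplacian_eq_sum_fderiv_fderiv (stdOrthonormalBasis ℝ E)]
  exact Finset.sum_nonpos fun i _ => fderiv_fderiv_nonpos_of_isLocalMax hf h _

lemma nonpos_of_laplacian_pos {f : E → ℝ} {K : Set E} (hK : IsCompact K)
    (hfK : ContinuousOn f K)
    (h : ∀ x ∈ K, 0 < f x → K ∈ 𝓝 x ∧ ContDiffAt ℝ 2 f x ∧ 0 < Δ f x) : ∀ x ∈ K, f x ≤ 0 := by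
  intro x hx
  obtain ⟨y, hyK, hy⟩ := hK.exists_isMaxOn ⟨x, hx⟩ hfK
  refine (hy hx).trans (not_lt.1 fun hpos => ?_)
  obtain ⟨hnhds, hC, hΔ⟩ := h y hyK hpos
  exact (laplacian_nonpos_of_isLocalMax hC (hy.isLocalMax hnhds)).not_gt hΔ

lemma laplacian_comp_isometry (f : E → ℝ) (x₀ : E) (L : E ≃ₗᵢ[ℝ] E) (x : E) :
    Δ (fun y => f (x₀ + L y)) x = Δ f (x₀ + L x) := by
  let g : E → ℝ := fun y => f (x₀ + y)
  have hL : iteratedFDeriv ℝ 2 (g ∘ L) x =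
      (iteratedFDeriv ℝ 2 g (L x)).compContinuousLinearMap
        fun _ => (L.toContinuousLinearEquiv : E →L[ℝ] E) := by
    rw [← iteratedFDerivWithin_univ, ← iteratedFDerivWithin_univ]
    exact L.toContinuousLinearEquiv.iteratedFDerivWithin_comp_right g uniqueDiffOn_univ
      (Set.mem_univ (L x)) 2
  let b := stdOrthonormalBasis ℝ E
  change Δ (g ∘ L) x = _
  rw [laplacian_eq_iteratedFDeriv_orthonormalBasis (g ∘ L) b,
    laplacian_eq_iteratedFDeriv_orthonormalBasis f (b.map L)]
  refine Finset.sum_congr rfl fun i _ => ?_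
  rw [hL, iteratedFDeriv_comp_add_left, ContinuousMultilinearMap.compContinuousLinearMap_apply]
  congr with j
  fin_cases j <;> rfl

lemma laplacian_barrier {e : E} (he : ‖e‖ = 1) (α k d : ℝ) (x : E) :
    Δ (barrier e α k d) x = 2 * α * Module.finrank ℝ E - 2 * k := by
  have hfirst : fderiv ℝ (barrier e α k d) = fun y =>
      (2 * α) • innerSL ℝ y + (k * (d - 2 * inner ℝ e y)) • innerSL ℝ e := by
    funext y
    have hinner : HasFDerivAt (fun z : E => inner ℝ e z) (innerSL ℝ e) y :=
      (innerSL ℝ e).hasFDerivAt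
    have hnorm : HasFDerivAt (fun z : E => ‖z‖ ^ 2) ((2 : ℕ) • innerSL ℝ y) y :=
      (hasStrictFDerivAt_norm_sq y).hasFDerivAt
    refine HasFDerivAt.fderiv (((hnorm.const_mul α).add
      ((hinner.mul (hinner.const_sub d)).const_mul k)).congr_fderiv ?_)
    ext v
    simp
    ring
  have hsecond : ∀ v, fderiv ℝ (fderiv ℝ (barrier e α k d)) x v v =
      2 * α * ‖v‖ ^ 2 - 2 * k * inner ℝ e v ^ 2 := fun v => by
    have hinner : HasFDerivAt (fun z : E => k * (d - 2 * inner ℝ e z))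
        (k • -((2 : ℝ) • innerSL ℝ e)) x :=
      (((innerSL ℝ e).hasFDerivAt.const_mul 2).const_sub d).const_mul k
    rw [hfirst, HasFDerivAt.fderiv (f := fun y => (2 * α) • innerSL ℝ y + _)
      (((innerSL ℝ).hasFDerivAt.const_smul (2 * α)).fun_add (hinner.smul_const (innerSL ℝ e)))]
    have hself : innerSL ℝ v v = ‖v‖ ^ 2 := real_inner_self_eq_norm_sq v
    simp [hself]
    ring
  let b := stdOrthonormalBasis ℝ E
  have hsum : ∑ i, inner ℝ e (b i) ^ 2 = ‖e‖ ^ 2 := by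
    simpa using b.sum_sq_norm_inner_left e
  rw [laplacian_eq_sum_fderiv_fderiv b]
  simp only [hsecond, b.norm_eq_one, Finset.sum_sub_distrib, ← Finset.mul_sum, hsum, he]
  simp

lemma le_barrier {v : E → ℝ} {e x : E} {d M N k : ℝ} (he : ‖e‖ = 1) (hd : 0 < d)
    (hv : ∀ y ∈ closedBall 0 d, ContDiffAt ℝ 2 v y) (hM : ∀ y ∈ closedBall 0 d, |v y| ≤ M)
    (hN : ∀ y ∈ closedBall 0 d, |Δ v y| ≤ N) (hv0 : ∀ y, inner ℝ e y = 0 → v y = 0)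
    (hk : Module.finrank ℝ E * M / d ^ 2 + N / 2 < k) (hx : ‖x‖ ≤ d) (hxe : 0 ≤ inner ℝ e x) :
    v x ≤ barrier e (M / d ^ 2) k d x := by
  have hM0 : 0 ≤ M := (abs_nonneg _).trans (hM 0 (mem_closedBall_self hd.le))
  have hN0 : 0 ≤ N := (abs_nonneg _).trans (hN 0 (mem_closedBall_self hd.le))
  have hk0 : 0 ≤ k := le_trans (by positivity) hk.le
  have hw : ∀ y ∈ closedBall 0 d, ContDiffAt ℝ 2 (v - barrier e (M / d ^ 2) k d) y :=
    fun y hy => (hv y hy).sub (contDiff_barrier ..).contDiffAt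
  have hK : IsCompact (closedBall (0 : E) d ∩ {y | 0 ≤ inner ℝ e y}) :=
    (isCompact_closedBall 0 d).inter_right (isClosed_le continuous_const (by fun_prop))
  refine sub_nonpos.1 (nonpos_of_laplacian_pos hK
    (fun y hy => (hw y hy.1).continuousAt.continuousWithinAt) (fun y hy hwy => ?_) x
    ⟨mem_closedBall_zero_iff.2 hx, hxe⟩)
  have hwy' : barrier e (M / d ^ 2) k d y < v y := sub_pos.1 hwy
  have hprod : 0 ≤ k * (inner ℝ e y * (d - inner ℝ e y)) :=
    mul_nonneg hk0 (mul_nonneg hy.2 (sub_nonneg.2 ((real_inner_le_norm e y).trans (by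
      simpa [he] using hy.1))))
  have hyd : ‖y‖ < d := lt_of_le_of_ne (mem_closedBall_zero_iff.1 hy.1) fun h => by
    have hMd : M / d ^ 2 * d ^ 2 = M := by field_simp
    rw [barrier, h, hMd] at hwy'
    linarith [le_abs_self (v y), hM y hy.1]
  have hye : 0 < inner ℝ e y := lt_of_le_of_ne hy.2 fun h => by
    rw [hv0 y h.symm, barrier] at hwy'
    linarith [show 0 ≤ M / d ^ 2 * ‖y‖ ^ 2 by positivity]
  refine ⟨inter_mem (closedBall_mem_nhds_of_mem (mem_ball_zero_iff.2 hyd))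
    ((continuousAt_const.eventually_lt (by fun_prop) hye).mono fun _ => le_of_lt), hw y hy.1, ?_⟩
  rw [(hv y hy.1).laplacian_sub (contDiff_barrier ..).contDiffAt, laplacian_barrier he]
  have hrw : 2 * (M / d ^ 2) * Module.finrank ℝ E = 2 * (Module.finrank ℝ E * M / d ^ 2) := by ring
  linarith [neg_abs_le (Δ v y), hN y hy.1]

section

variable {u : E → ℝ} {x₀ e : E} {d M N : ℝ}

lemma laplacian_half_sub_comp_isometry {L : E ≃ₗᵢ[ℝ] E} {x : E}
    (hu : ContDiffAt ℝ 2 u (x₀ + x)) (huL : ContDiffAt ℝ 2 u (x₀ + L x)) :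
    Δ (fun y => (2⁻¹ : ℝ) • (u (x₀ + y) - u (x₀ + L y))) x =
      2⁻¹ * (Δ u (x₀ + x) - Δ u (x₀ + L x)) := by
  let f : E → ℝ := fun y => u (x₀ + LinearIsometryEquiv.refl ℝ E y)
  let g : E → ℝ := fun y => u (x₀ + L y)
  have hf : ContDiffAt ℝ 2 f x := hu.comp x (by fun_prop)
  have hg : ContDiffAt ℝ 2 g x := huL.comp x (by fun_prop)
  have hfg : ContDiffAt ℝ 2 (f - g) x := hf.sub hg
  change Δ ((2⁻¹ : ℝ) • (f - g)) x = _
  rw [laplacian_smul _ hfg, hf.laplacian_sub hg, laplacian_comp_isometry,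
    laplacian_comp_isometry, smul_eq_mul, LinearIsometryEquiv.coe_refl, id]

-- The odd part of `u` in the direction `e` vanishes on the hyperplane through `x₀` orthogonal to
-- `e`, so the barrier need only dominate it on the spherical part of the boundary of the half ball.
lemma half_sub_le_barrier {k t : ℝ} (he : ‖e‖ = 1) (hd : 0 < d)
    (hu : ∀ x ∈ closedBall x₀ d, ContDiffAt ℝ 2 u x)
    (hM : ∀ x ∈ closedBall x₀ d, |u x| ≤ M) (hN : ∀ x ∈ closedBall x₀ d, |Δ u x| ≤ N)
    (hk : Module.finrank ℝ E * M / d ^ 2 + N / 2 < k) (ht : 0 ≤ t) (htd : t ≤ d) :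
    (u (x₀ + t • e) - u (x₀ - t • e)) / 2 ≤ M / d ^ 2 * t ^ 2 + k * (t * (d - t)) := by
  let s : E ≃ₗᵢ[ℝ] E := (ℝ ∙ e)ᗮ.reflection
  have hse : s (t • e) = -(t • e) := by
    rw [map_smul, ← smul_neg]
    exact congrArg _ (Submodule.reflection_orthogonalComplement_singleton_eq_neg e)
  have hfix : ∀ y, inner ℝ e y = 0 → s y = y := fun y hy =>
    Submodule.reflection_mem_subspace_eq_self
      (Submodule.mem_orthogonal_singleton_iff_inner_right.2 hy)
  have hmem : ∀ y ∈ closedBall 0 d, x₀ + y ∈ closedBall x₀ d := fun y hy => by simpa using hy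
  have hmem_s : ∀ y ∈ closedBall 0 d, x₀ + s y ∈ closedBall x₀ d := fun y hy => by simpa using hy
  have hhalf : ∀ {p q B : ℝ}, |p| ≤ B → |q| ≤ B → |2⁻¹ * (p - q)| ≤ B := fun {p q B} hp hq => by
    rw [abs_le] at *
    constructor <;> linarith
  have h := le_barrier (v := fun y => (2⁻¹ : ℝ) • (u (x₀ + y) - u (x₀ + s y))) (x := t • e) he hd
    (fun y hy => contDiffAt_half_sub_comp_isometry (hu _ (hmem y hy)) (hu _ (hmem_s y hy)))
    (fun y hy => hhalf (hM _ (hmem y hy)) (hM _ (hmem_s y hy)))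
    (fun y hy => by
      rw [laplacian_half_sub_comp_isometry (hu _ (hmem y hy)) (hu _ (hmem_s y hy))]
      exact hhalf (hN _ (hmem y hy)) (hN _ (hmem_s y hy)))
    (fun y hy => by rw [hfix y hy, sub_self, smul_zero]) hk
    (by rwa [norm_smul, he, mul_one, norm_of_nonneg ht])
    (by simpa [inner_smul_right, he] using ht)
  rw [hse, ← sub_eq_add_neg] at h
  simpa [barrier, norm_smul, he, inner_smul_right, div_eq_inv_mul] using h

lemma fderiv_apply_le_of_laplacian_le (he : ‖e‖ = 1) (hd : 0 < d)
    (hu : ∀ x ∈ closedBall x₀ d, ContDiffAt ℝ 2 u x)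
    (hM : ∀ x ∈ closedBall x₀ d, |u x| ≤ M) (hN : ∀ x ∈ closedBall x₀ d, |Δ u x| ≤ N) :
    fderiv ℝ u x₀ e ≤ (Module.finrank ℝ E * M / d ^ 2 + N / 2) * d := by
  refine (div_le_iff₀ hd).1 (le_of_forall_gt_imp_ge_of_dense fun k hk => (div_le_iff₀ hd).2 ?_)
  have hu₀ := ((hu x₀ (mem_closedBall_self hd.le)).differentiableAt two_ne_zero).hasFDerivAt
  have hline : ∀ v, HasDerivAt (fun t : ℝ => u (x₀ + t • v)) (fderiv ℝ u x₀ v) 0 := fun v =>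
    hu₀.hasLineDerivAt v
  have hslope : Tendsto (fun t : ℝ => t⁻¹ • ((u (x₀ + t • e) - u (x₀ + t • -e)) / 2))
      (𝓝[>] 0) (𝓝 (fderiv ℝ u x₀ e)) := by
    simpa using (((hline e).sub (hline (-e))).div_const 2).tendsto_slope_zero_right
  have hbound : Tendsto (fun t : ℝ => M / d ^ 2 * t + k * (d - t)) (𝓝[>] 0) (𝓝 (k * d)) := by
    have hcont : Continuous fun t : ℝ => M / d ^ 2 * t + k * (d - t) := by fun_prop
    simpa using (hcont.tendsto 0).mono_left nhdsWithin_le_nhds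
  refine le_of_tendsto_of_tendsto hslope hbound ?_
  filter_upwards [Ioc_mem_nhdsGT hd] with t ht
  rw [smul_eq_mul, inv_mul_le_iff₀ ht.1, smul_neg, ← sub_eq_add_neg]
  exact (half_sub_le_barrier he hd hu hM hN hk ht.1.le ht.2).trans_eq (by ring)

theorem norm_fderiv_le_of_laplacian_le (hd : 0 < d)
    (hu : ∀ x ∈ closedBall x₀ d, ContDiffAt ℝ 2 u x)
    (hM : ∀ x ∈ closedBall x₀ d, |u x| ≤ M) (hN : ∀ x ∈ closedBall x₀ d, |Δ u x| ≤ N) :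
    ‖fderiv ℝ u x₀‖ ≤ (Module.finrank ℝ E * M / d ^ 2 + N / 2) * d := by
  have hM0 : 0 ≤ M := (abs_nonneg _).trans (hM x₀ (mem_closedBall_self hd.le))
  have hN0 : 0 ≤ N := (abs_nonneg _).trans (hN x₀ (mem_closedBall_self hd.le))
  refine ContinuousLinearMap.opNorm_le_of_unit_norm (by positivity) fun e he => abs_le.2 ⟨?_, ?_⟩
  · have h := fderiv_apply_le_of_laplacian_le ((norm_neg e).trans he) hd hu hM hN
    rw [map_neg] at h
    linarith
  · exact fderiv_apply_le_of_laplacian_le he hd hu hM hN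

end

end GradientEstimate

section ComplexGradient

open scoped Laplacian

/-- The complex gradient `2 ∂u/∂z = ∂₁u - i ∂₂u` of a real function on the plane. -/
def complexGrad (u : ℂ → ℝ) (z : ℂ) : ℂ := fderiv ℝ u z 1 - Complex.I * fderiv ℝ u z Complex.I

variable {u v : ℂ → ℝ} {z : ℂ}

lemma fderiv_apply_eq_re_complexGrad_mul (u : ℂ → ℝ) (z w : ℂ) :
    fderiv ℝ u z w = (complexGrad u z * w).re := by
  have hw : w = w.re • (1 : ℂ) + w.im • Complex.I := by simp
  conv_lhs => rw [hw, map_add, map_smul, map_smul]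
  simp [complexGrad]
  ring

lemma abs_fderiv_apply_le_norm_complexGrad (u : ℂ → ℝ) (z : ℂ) {w : ℂ} (hw : ‖w‖ = 1) :
    |fderiv ℝ u z w| ≤ ‖complexGrad u z‖ := by
  rw [fderiv_apply_eq_re_complexGrad_mul]
  simpa [hw] using Complex.abs_re_le_norm (complexGrad u z * w)

lemma norm_complexGrad_le (u : ℂ → ℝ) (z : ℂ) : ‖complexGrad u z‖ ≤ 2 * ‖fderiv ℝ u z‖ := by
  have h1 := (fderiv ℝ u z).le_opNorm 1
  have hI := (fderiv ℝ u z).le_opNorm Complex.I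
  refine (norm_sub_le _ _).trans ?_
  rw [norm_mul, Complex.norm_real, Complex.norm_real, Complex.norm_I]
  rw [norm_one] at h1
  rw [Complex.norm_I] at hI
  linarith

lemma complexGrad_congr (h : u =ᶠ[𝓝 z] v) : complexGrad u z = complexGrad v z := by
  rw [complexGrad, complexGrad, h.fderiv_eq]

lemma complexGrad_sub (hu : DifferentiableAt ℝ u z) (hv : DifferentiableAt ℝ v z) :
    complexGrad (fun w => u w - v w) z = complexGrad u z - complexGrad v z := by
  simp only [complexGrad, fderiv_fun_sub hu hv, sub_apply, Complex.ofReal_sub]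
  ring

lemma complexGrad_const_mul_comp_mul {c l : ℝ} (hu : DifferentiableAt ℝ u (l * z)) :
    complexGrad (fun w => c * u (l * w)) z = c * l * complexGrad u (l * z) := by
  have hscale : HasFDerivAt (fun w : ℂ => (l : ℂ) * w)
      ((l : ℂ) • ContinuousLinearMap.id ℝ ℂ) z := (hasFDerivAt_id z).const_mul (l : ℂ)
  have hcomp : HasFDerivAt (fun w => c * u (l * w)) _ z :=
    (hu.hasFDerivAt.comp z hscale).const_mul c
  have happly : ∀ w, fderiv ℝ (fun w => c * u (l * w)) z w = c * l * fderiv ℝ u (l * z) w := by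
    intro w
    have hlw : (l : ℂ) * w = l • w := (Complex.real_smul ..).symm
    rw [hcomp.fderiv]
    simp only [smul_apply, ContinuousLinearMap.comp_apply, ContinuousLinearMap.id_apply,
      smul_eq_mul, hlw, map_smul, mul_assoc]
  simp only [complexGrad, happly]
  push_cast
  ring

lemma complexGrad_re {g : ℂ → ℂ} {g' : ℂ} (hg : HasDerivAt g g' z) :
    complexGrad (fun w => (g w).re) z = g' := by
  have h := (Complex.reCLM.hasFDerivAt.comp z (hg.hasFDerivAt.restrictScalars ℝ)).fderiv
  change fderiv ℝ (fun w => (g w).re) z = _ at h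
  rw [complexGrad, h]
  apply Complex.ext <;> simp

lemma dbar_complexGrad (hu : ContDiffAt ℝ 2 u z) : dbar (complexGrad u) z = Δ u z := by
  have hD : DifferentiableAt ℝ (fderiv ℝ u) z :=
    (hu.fderiv_right (m := 1) (by norm_num)).differentiableAt one_ne_zero
  have happly : ∀ w, HasFDerivAt (fun y => ((fderiv ℝ u y w : ℝ) : ℂ))
      (Complex.ofRealCLM ∘L (fderiv ℝ (fderiv ℝ u) z).flip w) z := fun w =>
    Complex.ofRealCLM.hasFDerivAt.comp z (by
      simpa using hD.hasFDerivAt.clm_apply (hasFDerivAt_const w z))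
  have hgrad : HasFDerivAt (complexGrad u) _ z :=
    (happly 1).sub ((happly Complex.I).const_mul Complex.I)
  have hsymm : fderiv ℝ (fderiv ℝ u) z 1 Complex.I = fderiv ℝ (fderiv ℝ u) z Complex.I 1 :=
    (hu.isSymmSndFDerivAt (by simp)).eq _ _
  rw [laplacian_eq_sum_fderiv_fderiv Complex.orthonormalBasisOneI, dbar, hgrad.fderiv]
  simp only [Fin.sum_univ_two, Complex.coe_orthonormalBasisOneI, Matrix.cons_val_zero,
    Matrix.cons_val_one, sub_apply, smul_apply, ContinuousLinearMap.comp_apply,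
    ContinuousLinearMap.flip_apply, Complex.ofRealCLM_apply, hsymm, smul_eq_mul]
  push_cast
  linear_combination (-(fderiv ℝ (fderiv ℝ u) z Complex.I Complex.I : ℂ)) * Complex.I_mul_I

lemma contDiffOn_complexGrad {s : Set ℂ} (hs : IsOpen s) (hu : ContDiffOn ℝ 2 u s) :
    ContDiffOn ℝ 1 (complexGrad u) s := by
  have hD : ContDiffOn ℝ 1 (fderiv ℝ u) s := hu.fderiv_of_isOpen hs (by norm_num)
  have happly : ∀ w, ContDiffOn ℝ 1 (fun y => ((fderiv ℝ u y w : ℝ) : ℂ)) s := fun w =>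
    Complex.ofRealCLM.contDiff.comp_contDiffOn (hD.clm_apply contDiffOn_const)
  exact (happly 1).sub (contDiffOn_const.mul (happly Complex.I))

end ComplexGradient

section SingularProfile

variable {c₀ κ r C : ℝ} {c z : ℂ}

/-- The model singularity `c₀ ln|z| + Re (c / z)` of a planar function whose complex gradient has
a pole of order one or two. -/
def singularProfile (c₀ : ℝ) (c : ℂ) (z : ℂ) : ℝ := c₀ * log ‖z‖ + (c / z).re

lemma exists_re_hasDerivAt_singularProfile (c₀ : ℝ) (c : ℂ) (hz : z ≠ 0) :
    ∃ g : ℂ → ℂ, HasDerivAt g (c₀ / z - c / z ^ 2) z ∧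
      singularProfile c₀ c =ᶠ[𝓝 z] fun w => (g w).re := by
  refine ⟨fun w => c₀ * log ‖z‖ + c₀ * Complex.log (w / z) + c / w, ?_, ?_⟩
  · have hlog : HasDerivAt (fun w => Complex.log (w / z)) (1 / z / (z / z)) z :=
      ((hasDerivAt_id z).div_const z).clog (by simp [hz])
    refine (((hlog.const_mul (c₀ : ℂ)).const_add ((c₀ : ℂ) * log ‖z‖)).add
      ((hasDerivAt_inv hz).const_mul c)).congr_deriv ?_
    rw [div_self hz]
    ring
  · filter_upwards [eventually_ne_nhds hz] with w hw
    simp [singularProfile, Complex.log_re, log_div, hz, hw]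
    ring

lemma complexGrad_singularProfile (c₀ : ℝ) (c : ℂ) (hz : z ≠ 0) :
    complexGrad (singularProfile c₀ c) z = c₀ / z - c / z ^ 2 := by
  obtain ⟨g, hg, hS⟩ := exists_re_hasDerivAt_singularProfile c₀ c hz
  rw [complexGrad_congr hS, complexGrad_re hg]

lemma differentiableAt_singularProfile (c₀ : ℝ) (c : ℂ) (hz : z ≠ 0) :
    DifferentiableAt ℝ (singularProfile c₀ c) z := by
  obtain ⟨g, hg, hS⟩ := exists_re_hasDerivAt_singularProfile c₀ c hz
  exact (Complex.reCLM.differentiableAt.comp z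
    (hg.differentiableAt.restrictScalars ℝ)).congr_of_eventuallyEq hS

lemma abs_singularProfile_le (hκ : 0 < κ) (hc : κ < 1 → c = 0) (hz : z ≠ 0) (hz1 : ‖z‖ ≤ 1) :
    |singularProfile c₀ c z| ≤ (|c₀| / κ + ‖c‖) * ‖z‖ ^ (-κ) := by
  have hpos : 0 < ‖z‖ := norm_pos_iff.2 hz
  have hlog : |log ‖z‖| ≤ 1 / κ * ‖z‖ ^ (-κ) := by
    have h := (abs_log_mul_self_rpow_lt ‖z‖ κ hpos hz1 hκ).le
    rw [abs_mul, abs_of_nonneg (rpow_nonneg hpos.le κ)] at h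
    rwa [rpow_neg hpos.le, ← div_eq_mul_inv, le_div_iff₀ (rpow_pos_of_pos hpos κ)]
  have hpole : ‖c / z‖ ≤ ‖c‖ * ‖z‖ ^ (-κ) := by
    rcases lt_or_ge κ 1 with h | h
    · simp [hc h]
    · rw [norm_div, div_eq_mul_inv, ← rpow_neg_one]
      exact mul_le_mul_of_nonneg_left
        (rpow_le_rpow_of_exponent_ge hpos hz1 (by linarith)) (norm_nonneg c)
  calc |singularProfile c₀ c z| ≤ |c₀| * |log ‖z‖| + ‖c / z‖ :=
        (abs_add_le _ _).trans (add_le_add (abs_mul _ _).le (Complex.abs_re_le_norm _))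
    _ ≤ |c₀| * (1 / κ * ‖z‖ ^ (-κ)) + ‖c‖ * ‖z‖ ^ (-κ) := by gcongr
    _ = _ := by ring

lemma exists_norm_eq_complexGrad_mul_im_eq_zero {u : ℂ → ℝ} {s : ℝ} (hs : 0 < s)
    (hu : ∀ z, ‖z‖ = s → DifferentiableAt ℝ u z) :
    ∃ z, ‖z‖ = s ∧ (complexGrad u z * z).im = 0 := by
  have hnorm : ∀ θ, ‖circleMap 0 s θ‖ = s := fun θ => by simp [abs_of_pos hs]
  have hderiv : ∀ θ, HasDerivAt (fun θ => u (circleMap 0 s θ))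
      (fderiv ℝ u (circleMap 0 s θ) (circleMap 0 s θ * Complex.I)) θ := fun θ =>
    (hu _ (hnorm θ)).hasFDerivAt.comp_hasDerivAt θ (hasDerivAt_circleMap 0 s θ)
  obtain ⟨θ, -, hθ⟩ := exists_hasDerivAt_eq_zero two_pi_pos
    (fun θ _ => (hderiv θ).continuousAt.continuousWithinAt)
    (by simp [circleMap]) fun θ _ => hderiv θ
  refine ⟨_, hnorm θ, ?_⟩
  rw [fderiv_apply_eq_re_complexGrad_mul, ← mul_assoc, Complex.mul_I_re] at hθ
  exact neg_eq_zero.1 hθ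

lemma im_residue_complexGrad_eq_zero {u : ℂ → ℝ} {η K : ℝ} (hr : 0 < r)
    (hu : ∀ z ≠ 0, ‖z‖ < r → DifferentiableAt ℝ u z) (hη : 0 < η)
    (hK : ∀ z ≠ 0, ‖z‖ < r → ‖complexGrad u z - c / z‖ ≤ K * ‖z‖ ^ (η - 1)) : c.im = 0 := by
  have hle : ∀ᶠ s in 𝓝[>] (0 : ℝ), |c.im| ≤ K * s ^ η := by
    filter_upwards [Ioo_mem_nhdsGT hr] with s hs
    have hne : ∀ z : ℂ, ‖z‖ = s → z ≠ 0 := fun z hz => norm_pos_iff.1 (hz ▸ hs.1)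
    obtain ⟨z, hz, him⟩ := exists_norm_eq_complexGrad_mul_im_eq_zero hs.1
      fun z hz => hu z (hne z hz) (hz ▸ hs.2)
    have him' : ((complexGrad u z - c / z) * z).im = -c.im := by
      rw [sub_mul, div_mul_cancel₀ _ (hne z hz), Complex.sub_im, him, zero_sub]
    calc |c.im| = |((complexGrad u z - c / z) * z).im| := by rw [him', abs_neg]
      _ ≤ ‖complexGrad u z - c / z‖ * ‖z‖ := (Complex.abs_im_le_norm _).trans (norm_mul _ _).le
      _ ≤ K * s ^ (η - 1) * s := by
        have h := hK z (hne z hz) (hz ▸ hs.2)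
        rw [hz] at h ⊢
        exact mul_le_mul_of_nonneg_right h hs.1.le
      _ = K * s ^ η := by rw [mul_assoc, ← rpow_add_one hs.1.ne', sub_add_cancel]
  have hlim : Tendsto (fun s : ℝ => K * s ^ η) (𝓝[>] 0) (𝓝 0) := by
    have h := ((continuousAt_rpow_const 0 η (Or.inr hη.le)).tendsto.mono_left
      (nhdsWithin_le_nhds (s := Set.Ioi 0))).const_mul K
    simpa [zero_rpow hη.ne'] using h
  exact abs_nonpos_iff.1 (ge_of_tendsto hlim hle)

variable {u : ℂ → ℝ}

open scoped Laplacian in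
lemma exists_norm_complexGrad_sub_div_pow_le (k : ℕ) (hr : 0 < r) (hr1 : r ≤ 1)
    (hk : k ≤ κ + 1) (hκ : κ < k) (hu : ContDiffOn ℝ 2 u (ball 0 r \ {0}))
    (hgrad : ∀ z ≠ 0, ‖z‖ < r → ‖complexGrad u z‖ ≤ C * ‖z‖ ^ (-κ - 1))
    (hΔ : ∀ z ≠ 0, ‖z‖ < r → |Δ u z| ≤ C * ‖z‖ ^ (-κ - 1)) :
    ∃ c : ℂ, ∀ κ', κ < κ' → ∃ K, 0 ≤ K ∧
      ∀ z ≠ 0, ‖z‖ < r / 4 → ‖complexGrad u z - c / z ^ k‖ ≤ K * ‖z‖ ^ (-κ') := by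
  have hopen : IsOpen (ball (0 : ℂ) r \ {0}) := isOpen_ball.sdiff isClosed_singleton
  have hexp : (k - κ : ℝ) - 1 - k = -κ - 1 := by ring
  obtain ⟨c, hc⟩ := exists_norm_sub_div_pow_le_rpow (η := k - κ) (C := C) k hr
    (contDiffOn_complexGrad hopen hu) (by simpa only [hexp] using hgrad)
    (fun z hz hzr => by
      have hmem : z ∈ ball (0 : ℂ) r \ {0} := ⟨mem_ball_zero_iff.2 hzr, hz⟩
      rw [dbar_complexGrad (hu.contDiffAt (hopen.mem_nhds hmem)), Complex.norm_real, hexp]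
      exact hΔ z hz hzr)
    (by linarith)
  refine ⟨c, fun κ' hκ' => ?_⟩
  obtain ⟨β, hκβ, hβ⟩ := exists_between (lt_min hκ' hκ)
  obtain ⟨K, hK⟩ := hc (k - β) (by linarith [hβ.trans_le (min_le_right κ' k)]) (by linarith)
  refine ⟨|K|, abs_nonneg K, fun z hz hzr => (hK z hz hzr).trans ?_⟩
  refine mul_le_mul (le_abs_self K) ?_ (rpow_nonneg (norm_nonneg z) _) (abs_nonneg K)
  refine rpow_le_rpow_of_exponent_ge (norm_pos_iff.2 hz) (by linarith) ?_
  linarith [hβ.trans_le (min_le_left κ' k)]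

open scoped Laplacian in
theorem exists_singularProfile (hr : 0 < r) (hr1 : r ≤ 1) (hκ : κ ∈ Set.Ioo 0 2)
    (hu : ContDiffOn ℝ 2 u (ball 0 r \ {0}))
    (hgrad : ∀ z ≠ 0, ‖z‖ < r → ‖complexGrad u z‖ ≤ C * ‖z‖ ^ (-κ - 1))
    (hΔ : ∀ z ≠ 0, ‖z‖ < r → |Δ u z| ≤ C * ‖z‖ ^ (-κ - 1)) :
    ∃ (c₀ : ℝ) (c : ℂ), (κ < 1 → c = 0) ∧ ∀ κ', κ < κ' → ∃ K, 0 ≤ K ∧ ∀ z ≠ 0, ‖z‖ < r / 4 →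
      ‖complexGrad u z - complexGrad (singularProfile c₀ c) z‖ ≤ K * ‖z‖ ^ (-κ') := by
  rcases lt_or_ge κ 1 with hκ1 | hκ1
  · obtain ⟨c, hc⟩ := exists_norm_complexGrad_sub_div_pow_le 1 hr hr1 (by simp [hκ.1.le])
      (by simpa using hκ1) hu hgrad hΔ
    have him : c.im = 0 := by
      obtain ⟨β, hκβ, hβ⟩ := exists_between hκ1
      obtain ⟨K, -, hK⟩ := hc β hκβ
      refine im_residue_complexGrad_eq_zero (u := u) (r := r / 4) (η := 1 - β) (K := K)
        (by positivity) (fun z hz hzr => ?_) (by linarith) fun z hz hzr => ?_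
      · exact (hu.contDiffAt ((isOpen_ball.sdiff isClosed_singleton).mem_nhds
          ⟨mem_ball_zero_iff.2 (by linarith), hz⟩)).differentiableAt two_ne_zero
      · simpa using hK z hz hzr
    refine ⟨c.re, 0, fun _ => rfl, fun κ' hκ' => (hc κ' hκ').imp fun K hK =>
      ⟨hK.1, fun z hz hzr => ?_⟩⟩
    have hcre : (c.re : ℂ) = c := Complex.ext rfl him.symm
    simpa [complexGrad_singularProfile _ _ hz, hcre] using hK.2 z hz hzr
  · obtain ⟨c, hc⟩ := exists_norm_complexGrad_sub_div_pow_le 2 hr hr1 (by norm_num; linarith)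
      (by simpa using hκ.2) hu hgrad hΔ
    refine ⟨0, -c, fun h => absurd h hκ1.not_gt, fun κ' hκ' => (hc κ' hκ').imp fun K hK =>
      ⟨hK.1, fun z hz hzr => ?_⟩⟩
    simpa [complexGrad_singularProfile _ _ hz, neg_div] using hK.2 z hz hzr

end SingularProfile

section AxisGeometry

variable {a b R : ℝ} {x y : V3}

/-- The horizontal component `x'` of a point of space, as the complex number `x₁ + i x₂`. -/
def axisProj : V3 →L[ℝ] ℂ :=
  (EuclideanSpace.proj (0 : Fin 3) : V3 →L[ℝ] ℝ).smulRight 1 +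
    (EuclideanSpace.proj (1 : Fin 3) : V3 →L[ℝ] ℝ).smulRight Complex.I

/-- The horizontal vector of space with complex coordinate `z`. -/
def horizontal : ℂ →L[ℝ] V3 :=
  Complex.reCLM.smulRight (e3 0) + Complex.imCLM.smulRight (e3 1)

/-- The point of the horizontal plane `x₃ = t` with complex coordinate `z`. -/
def slicePoint (t : ℝ) (z : ℂ) : V3 := t • e3 2 + horizontal z

@[simp] lemma axisProj_re (x : V3) : (axisProj x).re = x 0 := by simp [axisProj]

@[simp] lemma axisProj_im (x : V3) : (axisProj x).im = x 1 := by simp [axisProj]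

lemma rho_eq_norm_axisProj (x : V3) : rho x = ‖axisProj x‖ := by
  rw [rho, Complex.norm_eq_sqrt_sq_add_sq, axisProj_re, axisProj_im]

lemma rho_nonneg (x : V3) : 0 ≤ rho x := sqrt_nonneg _

lemma axisProj_eq_zero : axisProj x = 0 ↔ x ∈ axis3 := by simp [Complex.ext_iff, axis3]

lemma rho_pos : 0 < rho x ↔ x ∉ axis3 := by
  rw [rho_eq_norm_axisProj, norm_pos_iff, Ne, axisProj_eq_zero]

lemma continuous_rho : Continuous rho := by
  simpa only [funext rho_eq_norm_axisProj] using axisProj.continuous.norm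

lemma rho_le_norm (x : V3) : rho x ≤ ‖x‖ := by
  rw [rho, EuclideanSpace.norm_eq]
  refine sqrt_le_sqrt ?_
  simp [Fin.sum_univ_three, sq_nonneg]

lemma abs_rho_sub_le (x y : V3) : |rho x - rho y| ≤ ‖x - y‖ := by
  rw [rho_eq_norm_axisProj, rho_eq_norm_axisProj]
  refine (abs_norm_sub_norm_le _ _).trans ?_
  rw [← map_sub, ← rho_eq_norm_axisProj]
  exact rho_le_norm _

lemma isClosed_axis3 : IsClosed axis3 := by
  rw [show axis3 = axisProj ⁻¹' {0} from Set.ext fun x => axisProj_eq_zero.symm]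
  exact isClosed_singleton.preimage axisProj.continuous

lemma OmegaR_eq_inter (a b R : ℝ) :
    OmegaR a b R = {x | a < x 2} ∩ {x | x 2 < b} ∩ axisProj ⁻¹' ball 0 R := by
  ext x
  simp [OmegaR, rho_eq_norm_axisProj, and_assoc]

lemma isOpen_OmegaR (a b R : ℝ) : IsOpen (OmegaR a b R) := by
  have hcoord : Continuous fun x : V3 => x 2 := by fun_prop
  rw [OmegaR_eq_inter]
  exact ((isOpen_lt continuous_const hcoord).inter (isOpen_lt hcoord continuous_const)).inter
    (isOpen_ball.preimage axisProj.continuous)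

lemma isOpen_OmegaR_diff_axis3 (a b R : ℝ) : IsOpen (OmegaR a b R \ axis3) :=
  (isOpen_OmegaR a b R).sdiff isClosed_axis3

lemma convex_OmegaR (a b R : ℝ) : Convex ℝ (OmegaR a b R) := by
  have hcoord : IsLinearMap ℝ fun x : V3 => x 2 := ⟨fun _ _ => rfl, fun _ _ => rfl⟩
  rw [OmegaR_eq_inter]
  exact ((convex_halfSpace_gt hcoord a).inter (convex_halfSpace_lt hcoord b)).inter
    ((convex_ball 0 R).linear_preimage axisProj.toLinearMap)

lemma norm_sub_smul_e3_two (x : V3) : ‖x - x 2 • e3 2‖ = rho x := by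
  simp [EuclideanSpace.norm_eq, Fin.sum_univ_three, e3, rho]

lemma isBounded_OmegaR (a b R : ℝ) : Bornology.IsBounded (OmegaR a b R) := by
  refine isBounded_iff_forall_norm_le.2 ⟨R + max |a| |b|, fun x hx => ?_⟩
  calc ‖x‖ = ‖(x - x 2 • e3 2) + x 2 • e3 2‖ := by rw [sub_add_cancel]
    _ ≤ ‖x - x 2 • e3 2‖ + ‖x 2 • e3 2‖ := norm_add_le _ _
    _ = rho x + |x 2| := by rw [norm_sub_smul_e3_two, norm_smul, e3]; simp
    _ ≤ R + max |a| |b| := add_le_add hx.2.2.le (abs_le_max_abs_abs hx.1.le hx.2.1.le)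

lemma coord_two_mem_Icc_of_mem_closure (hx : x ∈ closure (OmegaR a b R)) :
    x 2 ∈ Set.Icc a b :=
  closure_minimal (t := (fun x : V3 => x 2) ⁻¹' Set.Icc a b) (fun _ hy => ⟨hy.1.le, hy.2.1.le⟩)
    (isClosed_Icc.preimage (by fun_prop)) hx

lemma rho_emb (y : V2) (t : ℝ) : rho (emb y t) = ‖y‖ := by
  simp [rho, emb, EuclideanSpace.norm_eq]

@[simp] lemma emb_two (y : V2) (t : ℝ) : emb y t 2 = t := by simp [emb]

lemma emb_mem_OmegaR_diff_axis3 {y : V2} {t : ℝ} (ht : t ∈ Set.Ioo a b) (hy : y ≠ 0)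
    (hyR : ‖y‖ < R) : emb y t ∈ OmegaR a b R \ axis3 := by
  refine ⟨⟨?_, ?_, ?_⟩, rho_pos.1 ?_⟩ <;> simp [rho_emb, ht.1, ht.2, hy, hyR]

end AxisGeometry

section Slices

variable {f : V3 → ℝ} {t : ℝ} {z : ℂ}

@[simp] lemma slicePoint_zero (t : ℝ) (z : ℂ) : slicePoint t z 0 = z.re := by
  simp [slicePoint, horizontal, e3]

@[simp] lemma slicePoint_one (t : ℝ) (z : ℂ) : slicePoint t z 1 = z.im := by
  simp [slicePoint, horizontal, e3]

@[simp] lemma slicePoint_two (t : ℝ) (z : ℂ) : slicePoint t z 2 = t := by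
  simp [slicePoint, horizontal, e3]

@[simp] lemma axisProj_slicePoint (t : ℝ) (z : ℂ) : axisProj (slicePoint t z) = z := by
  simp [Complex.ext_iff]

lemma rho_slicePoint (t : ℝ) (z : ℂ) : rho (slicePoint t z) = ‖z‖ := by
  rw [rho_eq_norm_axisProj, axisProj_slicePoint]

@[simp] lemma slicePoint_axisProj (x : V3) : slicePoint (x 2) (axisProj x) = x := by
  ext j
  fin_cases j <;> simp

lemma smul_slicePoint (c t : ℝ) (z : ℂ) : c • slicePoint t z = slicePoint (c * t) (c * z) := by
  ext j
  fin_cases j <;> simp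

lemma slicePoint_mem_OmegaR_diff_axis3 {a b R : ℝ} (ht : t ∈ Set.Ioo a b) (hz : z ≠ 0)
    (hzR : ‖z‖ < R) : slicePoint t z ∈ OmegaR a b R \ axis3 := by
  refine ⟨⟨?_, ?_, ?_⟩, rho_pos.1 ?_⟩ <;> simp [rho_slicePoint, ht.1, ht.2, hz, hzR]

lemma hasFDerivAt_slicePoint (t : ℝ) (z : ℂ) : HasFDerivAt (slicePoint t) horizontal z :=
  horizontal.hasFDerivAt.const_add _

lemma contDiff_slicePoint {n : WithTop ℕ∞} (t : ℝ) : ContDiff ℝ n (slicePoint t) :=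
  contDiff_const.add horizontal.contDiff

lemma fderiv_comp_slicePoint (hf : DifferentiableAt ℝ f (slicePoint t z)) :
    fderiv ℝ (fun w => f (slicePoint t w)) z = fderiv ℝ f (slicePoint t z) ∘L horizontal :=
  (hf.hasFDerivAt.comp z (hasFDerivAt_slicePoint t z)).fderiv

@[simp] lemma horizontal_one : horizontal 1 = e3 0 := by simp [horizontal]

@[simp] lemma horizontal_I : horizontal Complex.I = e3 1 := by simp [horizontal]

lemma norm_complexGrad_comp_slicePoint_le (hf : DifferentiableAt ℝ f (slicePoint t z)) :
    ‖complexGrad (fun w => f (slicePoint t w)) z‖ ≤ 2 * ‖fderiv ℝ f (slicePoint t z)‖ := by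
  have hnorm : ‖horizontal‖ ≤ 1 := horizontal.opNorm_le_bound zero_le_one fun w => by
    simp [horizontal, e3, EuclideanSpace.norm_eq, Fin.sum_univ_three,
      Complex.norm_eq_sqrt_sq_add_sq]
  refine (norm_complexGrad_le _ z).trans ?_
  rw [fderiv_comp_slicePoint hf]
  gcongr
  exact (ContinuousLinearMap.opNorm_comp_le _ _).trans
    (mul_le_of_le_one_right (norm_nonneg _) hnorm)

lemma abs_pd_le_norm_complexGrad (hf : DifferentiableAt ℝ f (slicePoint t z)) :
    |pd 0 f (slicePoint t z)| ≤ ‖complexGrad (fun w => f (slicePoint t w)) z‖ ∧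
      |pd 1 f (slicePoint t z)| ≤ ‖complexGrad (fun w => f (slicePoint t w)) z‖ := by
  have h := fun w hw => abs_fderiv_apply_le_norm_complexGrad (fun w => f (slicePoint t w)) z
    (w := w) hw
  simp only [fderiv_comp_slicePoint hf, ContinuousLinearMap.comp_apply] at h
  exact ⟨by simpa [pd] using h 1 norm_one, by simpa [pd] using h Complex.I Complex.norm_I⟩

end Slices

section PartialDerivatives

variable {f g : V3 → ℝ} {x : V3}

lemma abs_pd_le (j : Fin 3) (f : V3 → ℝ) (x : V3) : |pd j f x| ≤ ‖fderiv ℝ f x‖ := by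
  simpa [pd, e3] using (fderiv ℝ f x).le_opNorm (e3 j)

lemma pd_congr (j : Fin 3) (h : f =ᶠ[𝓝 x] g) : pd j f x = pd j g x := by
  rw [pd, pd, h.fderiv_eq]

lemma contDiffAt_pd {m n : WithTop ℕ∞} (j : Fin 3) (hf : ContDiffAt ℝ n f x) (h : m + 1 ≤ n) :
    ContDiffAt ℝ m (pd j f) x :=
  (hf.fderiv_right h).clm_apply contDiffAt_const

lemma pd_pd (i j : Fin 3) (hf : ContDiffAt ℝ 2 f x) :
    pd i (pd j f) x = fderiv ℝ (fderiv ℝ f) x (e3 i) (e3 j) := by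
  have hD : DifferentiableAt ℝ (fderiv ℝ f) x :=
    (hf.fderiv_right (m := 1) (by norm_num)).differentiableAt one_ne_zero
  have hpd : HasFDerivAt (pd j f) _ x := hD.hasFDerivAt.clm_apply (hasFDerivAt_const (e3 j) x)
  simp [pd, hpd.fderiv]

lemma pd_pd_comm (i j : Fin 3) (hf : ContDiffAt ℝ 2 f x) :
    pd i (pd j f) x = pd j (pd i f) x := by
  rw [pd_pd i j hf, pd_pd j i hf]
  exact (hf.isSymmSndFDerivAt (by simp)).eq _ _

open scoped Laplacian in
lemma lap3_eq_laplacian (hf : ContDiffAt ℝ 2 f x) : lap3 f x = Δ f x := by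
  rw [laplacian_eq_sum_fderiv_fderiv (EuclideanSpace.basisFun (Fin 3) ℝ)]
  exact Finset.sum_congr rfl fun j _ => by simpa [e3] using pd_pd j j hf

lemma pd_fun_sum {ι : Type*} {s : Finset ι} {F : ι → V3 → ℝ} (j : Fin 3)
    (hF : ∀ i ∈ s, DifferentiableAt ℝ (F i) x) :
    pd j (fun y => ∑ i ∈ s, F i y) x = ∑ i ∈ s, pd j (F i) x := by
  simp only [pd, fderiv_fun_sum hF, sum_apply]

lemma lap3_pd (j : Fin 3) (hf : ContDiffAt ℝ 3 f x) : lap3 (pd j f) x = pd j (lap3 f) x := by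
  have hpd : ∀ i, ContDiffAt ℝ 2 (pd i f) x := fun i => contDiffAt_pd i hf (by norm_num)
  have hcomm : ∀ i, pd i (pd j f) =ᶠ[𝓝 x] pd j (pd i f) := fun i =>
    (hf.eventually (by simp)).mono fun y hy => pd_pd_comm i j (hy.of_le (by norm_num))
  calc lap3 (pd j f) x = ∑ i, pd i (pd j (pd i f)) x :=
        Finset.sum_congr rfl fun i _ => pd_congr i (hcomm i)
    _ = ∑ i, pd j (pd i (pd i f)) x := Finset.sum_congr rfl fun i _ => pd_pd_comm i j (hpd i)
    _ = pd j (lap3 f) x := (pd_fun_sum j fun i _ =>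
        (contDiffAt_pd (m := 1) i (hpd i) (by norm_num)).differentiableAt one_ne_zero).symm

open scoped Laplacian in
lemma laplacian_comp_slicePoint {t : ℝ} {z : ℂ} (hf : ContDiffAt ℝ 2 f (slicePoint t z)) :
    Δ (fun w => f (slicePoint t w)) z
      = lap3 f (slicePoint t z) - pd 2 (pd 2 f) (slicePoint t z) := by
  have hfirst : fderiv ℝ (fun w => f (slicePoint t w)) =ᶠ[𝓝 z]
      fun w => fderiv ℝ f (slicePoint t w) ∘L horizontal :=
    ((contDiff_slicePoint (n := 0) t).continuous.continuousAt.eventually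
      (hf.eventually (by simp))).mono fun w hw =>
        fderiv_comp_slicePoint (hw.differentiableAt two_ne_zero)
  have hD : DifferentiableAt ℝ (fderiv ℝ f) (slicePoint t z) :=
    (hf.fderiv_right (m := 1) (by norm_num)).differentiableAt one_ne_zero
  have hsecond : HasFDerivAt (fun w => fderiv ℝ f (slicePoint t w) ∘L horizontal) _ z :=
    (hD.hasFDerivAt.comp z (hasFDerivAt_slicePoint t z)).clm_comp
      (hasFDerivAt_const horizontal z)
  rw [laplacian_eq_sum_fderiv_fderiv Complex.orthonormalBasisOneI, hfirst.fderiv_eq,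
    hsecond.fderiv]
  simp [lap3, Fin.sum_univ_three, Fin.sum_univ_two, pd_pd _ _ hf]

end PartialDerivatives

section NearAxis

variable {a b r κ C m : ℝ} {u q : V3 → ℝ} {x : V3}

lemma mem_OmegaR_diff_axis3_of_mem_closedBall {y : V3} (hm : 2 * m ≤ r)
    (hx : x ∈ OmegaR (a + m) (b - m) m \ axis3) (hy : y ∈ closedBall x (rho x / 2)) :
    y ∈ OmegaR a b r \ axis3 ∧ rho x / 2 ≤ rho y := by
  have hρ : 0 < rho x := rho_pos.2 hx.2
  obtain ⟨hxa, hxb, hxm⟩ := hx.1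
  rw [mem_closedBall, dist_eq_norm] at hy
  have hrho := abs_le.1 ((abs_rho_sub_le y x).trans hy)
  have hcoord := abs_le.1 ((PiLp.norm_apply_le (y - x) 2).trans hy)
  rw [PiLp.sub_apply] at hcoord
  exact ⟨⟨⟨by linarith, by linarith, by linarith⟩, rho_pos.1 (by linarith)⟩, by linarith⟩

lemma mem_OmegaR_diff_axis3_of_shrink (hm : 2 * m ≤ r)
    (hx : x ∈ OmegaR (a + m) (b - m) m \ axis3) : x ∈ OmegaR a b r \ axis3 :=
  (mem_OmegaR_diff_axis3_of_mem_closedBall hm hx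
    (mem_closedBall_self (half_pos (rho_pos.2 hx.2)).le)).1

lemma rho_rpow_neg_le_of_half_le {s : ℝ} (hs : 0 ≤ s) (hx : 0 < rho x) {y : V3}
    (hy : rho x / 2 ≤ rho y) : rho y ^ (-s) ≤ 2 ^ s * rho x ^ (-s) := by
  calc rho y ^ (-s) ≤ (rho x / 2) ^ (-s) :=
        rpow_le_rpow_of_nonpos (by linarith) hy (by linarith)
    _ = 2 ^ s * rho x ^ (-s) := by
        rw [div_rpow hx.le zero_le_two, rpow_neg zero_le_two, div_inv_eq_mul, mul_comm]

lemma norm_fderiv_le_of_lap3_le (hκ : 0 ≤ κ) (hC : 0 ≤ C)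
    (hu : ∀ y ∈ OmegaR a b r \ axis3, ContDiffAt ℝ 2 u y)
    (hM : ∀ y ∈ OmegaR a b r \ axis3, |u y| ≤ C * rho y ^ (-κ))
    (hN : ∀ y ∈ OmegaR a b r \ axis3, |lap3 u y| ≤ C * rho y ^ (-κ - 2)) (hm : 2 * m ≤ r)
    (hx : x ∈ OmegaR (a + m) (b - m) m \ axis3) :
    ‖fderiv ℝ u x‖ ≤ 7 * 2 ^ κ * C * rho x ^ (-κ - 1) := by
  have hρ : 0 < rho x := rho_pos.2 hx.2
  have hmem := fun y hy => mem_OmegaR_diff_axis3_of_mem_closedBall (y := y) hm hx hy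
  have hgrad := norm_fderiv_le_of_laplacian_le (half_pos hρ) (fun y hy => hu y (hmem y hy).1)
    (M := C * (2 ^ κ * rho x ^ (-κ))) (N := C * (2 ^ (κ + 2) * rho x ^ (-(κ + 2))))
    (fun y hy => (hM y (hmem y hy).1).trans
      (mul_le_mul_of_nonneg_left (rho_rpow_neg_le_of_half_le hκ hρ (hmem y hy).2) hC))
    (fun y hy => by
      rw [← lap3_eq_laplacian (hu y (hmem y hy).1)]
      refine (hN y (hmem y hy).1).trans (mul_le_mul_of_nonneg_left ?_ hC)
      rw [← neg_add']
      exact rho_rpow_neg_le_of_half_le (by linarith) hρ (hmem y hy).2)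
  refine hgrad.trans_eq ?_
  have hpow₁ : rho x ^ (-κ) = rho x ^ (-κ - 1) * rho x := by
    rw [← rpow_add_one hρ.ne', sub_add_cancel]
  have hpow₂ : rho x ^ (-(κ + 2)) = rho x ^ (-κ - 1) / rho x := by
    rw [← rpow_sub_one hρ.ne']
    ring_nf
  rw [hpow₁, hpow₂, rpow_add two_pos, finrank_euclideanSpace_fin]
  norm_num
  field_simp
  ring

/-- `f` is `(-k)`-homogeneous on `s`: the scaling law holds between any two points of `s` on a
common ray. -/
def IsNegHomogeneousOn (k : ℕ) (f : V3 → ℝ) (s : Set V3) : Prop :=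
  ∀ x ∈ s, ∀ l : ℝ, 0 < l → l • x ∈ s → f (l • x) = (l ^ k)⁻¹ * f x

lemma IsNegHomogeneousOn.mono {k : ℕ} {f : V3 → ℝ} {s t : Set V3}
    (hf : IsNegHomogeneousOn k f t) (hst : s ⊆ t) : IsNegHomogeneousOn k f s :=
  fun x hx l hl hlx => hf x (hst hx) l hl (hst hlx)

lemma IsNegHomogeneousOn.fderiv_apply_self {k : ℕ} {f : V3 → ℝ} {s : Set V3}
    (hf : IsNegHomogeneousOn k f s) (hs : s ∈ 𝓝 x) (hfx : DifferentiableAt ℝ f x) :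
    fderiv ℝ f x x = -k * f x := by
  have hray : HasDerivAt (fun l : ℝ => l • x) x 1 := by
    simpa using (hasDerivAt_id (1 : ℝ)).smul_const x
  have hone : Tendsto (fun l : ℝ => l • x) (𝓝 1) (𝓝 x) := by
    simpa using hray.continuousAt.tendsto
  have hscale : (fun l : ℝ => f (l • x)) =ᶠ[𝓝 1] fun l => (l ^ k)⁻¹ * f x := by
    filter_upwards [hone hs, lt_mem_nhds zero_lt_one] with l hl hl0
    exact hf x (mem_of_mem_nhds hs) l hl0 hl
  have hleft : HasDerivAt (fun l : ℝ => f (l • x)) (fderiv ℝ f x x) 1 :=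
    HasFDerivAt.comp_hasDerivAt (1 : ℝ) (by simpa using hfx.hasFDerivAt) hray
  have hright : HasDerivAt (fun l : ℝ => (l ^ k)⁻¹ * f x) (-k * f x) 1 := by
    simpa using ((hasDerivAt_pow k (1 : ℝ)).fun_inv (by simp)).mul_const (f x)
  exact hleft.unique (hright.congr_of_eventuallyEq hscale)

/-- Blow-up rates of order `κ` near the axis. The Laplacian is one power of `|x'|` better than the
rate of `q` suggests, because it is a first derivative of a field growing like `|x'|^(-κ)`. -/
structure HasAxisBounds (a b r κ C : ℝ) (q : V3 → ℝ) : Prop where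
  contDiffAt : ∀ x ∈ OmegaR a b r \ axis3, ContDiffAt ℝ 3 q x
  abs_le : ∀ x ∈ OmegaR a b r \ axis3, |q x| ≤ C * rho x ^ (-κ)
  abs_lap3_le : ∀ x ∈ OmegaR a b r \ axis3, |lap3 q x| ≤ C * rho x ^ (-κ - 1)
  abs_pd_lap3_le : ∀ x ∈ OmegaR a b r \ axis3, |pd 2 (lap3 q) x| ≤ C * rho x ^ (-κ - 2)

namespace HasAxisBounds

lemma nonneg (hq : HasAxisBounds a b r κ C q) (hx : x ∈ OmegaR a b r \ axis3) : 0 ≤ C :=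
  nonneg_of_mul_nonneg_left ((abs_nonneg _).trans (hq.abs_le x hx))
    (rpow_pos_of_pos (rho_pos.2 hx.2) _)

lemma norm_fderiv_le (hq : HasAxisBounds a b r κ C q) (hr : r ≤ 1) (hκ : 0 ≤ κ)
    (hm : 2 * m ≤ r) (hx : x ∈ OmegaR (a + m) (b - m) m \ axis3) :
    ‖fderiv ℝ q x‖ ≤ 7 * 2 ^ κ * C * rho x ^ (-κ - 1) := by
  have hC := hq.nonneg (mem_OmegaR_diff_axis3_of_shrink hm hx)
  refine norm_fderiv_le_of_lap3_le hκ hC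
    (fun y hy => (hq.contDiffAt y hy).of_le (by norm_num)) hq.abs_le (fun y hy => ?_) hm hx
  refine (hq.abs_lap3_le y hy).trans (mul_le_mul_of_nonneg_left ?_ hC)
  exact rpow_le_rpow_of_exponent_ge (rho_pos.2 hy.2) (hy.1.2.2.le.trans hr) (by linarith)

variable {μ : ℝ}

lemma abs_pd_two_le (hq : HasAxisBounds a b r κ C q)
    (hhom : IsNegHomogeneousOn 2 q (OmegaR a b r \ axis3)) (hr : r ≤ 1) (hκ : 0 ≤ κ)
    (hμ : 0 < μ) (hab : ∀ t ∈ Set.Ioo a b, μ ≤ |t|) (hm : 2 * m ≤ r)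
    (hx : x ∈ OmegaR (a + m) (b - m) m \ axis3) :
    |pd 2 q x| ≤ (2 + 7 * 2 ^ κ) * C / μ * rho x ^ (-κ) := by
  have hρ : 0 < rho x := rho_pos.2 hx.2
  have hx' : x ∈ OmegaR a b r \ axis3 := mem_OmegaR_diff_axis3_of_shrink hm hx
  have heuler := hhom.fderiv_apply_self ((isOpen_OmegaR_diff_axis3 a b r).mem_nhds hx')
    ((hq.contDiffAt x hx').differentiableAt three_ne_zero)
  have hsplit : x 2 * pd 2 q x = -2 * q x - fderiv ℝ q x (x - x 2 • e3 2) := by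
    rw [map_sub, map_smul, heuler, smul_eq_mul, pd]
    push_cast
    ring
  rw [div_mul_eq_mul_div, le_div_iff₀ hμ]
  calc |pd 2 q x| * μ ≤ |x 2 * pd 2 q x| := by
        rw [abs_mul, mul_comm]
        gcongr
        exact hab _ ⟨hx'.1.1, hx'.1.2.1⟩
    _ ≤ 2 * |q x| + ‖fderiv ℝ q x‖ * rho x := by
        rw [hsplit]
        refine (abs_sub _ _).trans (add_le_add (by simp [abs_mul]) ?_)
        simpa only [Real.norm_eq_abs, norm_sub_smul_e3_two]
          using (fderiv ℝ q x).le_opNorm (x - x 2 • e3 2)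
    _ ≤ 2 * (C * rho x ^ (-κ)) + 7 * 2 ^ κ * C * rho x ^ (-κ - 1) * rho x := by
        gcongr
        exacts [hq.abs_le x hx', hq.norm_fderiv_le hr hκ hm hx]
    _ = (2 + 7 * 2 ^ κ) * C * rho x ^ (-κ) := by
        rw [mul_assoc (7 * 2 ^ κ * C), ← rpow_add_one hρ.ne', sub_add_cancel]
        ring

lemma abs_pd_two_pd_two_le (hq : HasAxisBounds a b r κ C q)
    (hhom : IsNegHomogeneousOn 2 q (OmegaR a b r \ axis3)) (hr : r ≤ 1) (hκ : 0 ≤ κ)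
    (hμ : 0 < μ) (hab : ∀ t ∈ Set.Ioo a b, μ ≤ |t|) (hm : 4 * m ≤ r)
    (hx : x ∈ OmegaR (a + 3 * m) (b - 3 * m) m \ axis3) :
    |pd 2 (pd 2 q) x| ≤ 7 * 2 ^ κ * ((2 + 7 * 2 ^ κ) * C / μ + C) * rho x ^ (-κ - 1) := by
  have hx2 : x ∈ OmegaR (a + 2 * m + m) (b - 2 * m - m) m \ axis3 := by
    convert hx using 3 <;> ring
  have hsub : ∀ {y}, y ∈ OmegaR (a + 2 * m) (b - 2 * m) (2 * m) \ axis3 →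
      y ∈ OmegaR a b r \ axis3 := fun hy => mem_OmegaR_diff_axis3_of_shrink (by linarith) hy
  have hC : 0 ≤ C := hq.nonneg (hsub (mem_OmegaR_diff_axis3_of_shrink le_rfl hx2))
  refine (abs_pd_le _ _ _).trans (norm_fderiv_le_of_lap3_le hκ (by positivity) (fun y hy =>
    contDiffAt_pd 2 (hq.contDiffAt y (hsub hy)) (by norm_num)) (fun y hy => ?_)
    (fun y hy => ?_) le_rfl hx2)
  · refine (hq.abs_pd_two_le hhom hr hκ hμ hab (by linarith) hy).trans ?_
    exact mul_le_mul_of_nonneg_right (le_add_of_nonneg_right hC)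
      (rpow_nonneg (rho_nonneg y) _)
  · rw [lap3_pd 2 (hq.contDiffAt y (hsub hy))]
    exact (hq.abs_pd_lap3_le y (hsub hy)).trans (mul_le_mul_of_nonneg_right
      (le_add_of_nonneg_left (by positivity)) (rpow_nonneg (rho_nonneg y) _))

end HasAxisBounds

end NearAxis

section SliceAsymptotics

variable {a b r κ C : ℝ} {q : V3 → ℝ}

lemma mul_pos_of_mem_Icc {s t : ℝ} (hab : 0 < a * b) (hs : s ∈ Set.Icc a b)
    (ht : t ∈ Set.Icc a b) : 0 < s * t := by
  rcases mul_pos_iff.1 hab with ⟨ha, -⟩ | ⟨-, hb⟩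
  · exact mul_pos (ha.trans_le hs.1) (ha.trans_le ht.1)
  · exact mul_pos_of_neg_of_neg (hs.2.trans_lt hb) (ht.2.trans_lt hb)

lemma min_abs_le_abs_of_mem_Icc {t : ℝ} (hab : 0 < a * b) (ht : t ∈ Set.Icc a b) :
    min |a| |b| ≤ |t| := by
  rcases mul_pos_iff.1 hab with ⟨ha, -⟩ | ⟨-, hb⟩
  · exact (min_le_left _ _).trans (abs_le_abs_of_nonneg ha.le ht.1)
  · exact (min_le_right _ _).trans (abs_le_abs_of_nonpos hb.le ht.2)

lemma exists_div_le_of_mem_Icc (hab : 0 < a * b) :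
    ∃ L, 0 < L ∧ ∀ s ∈ Set.Icc a b, ∀ t ∈ Set.Icc a b, 0 < s / t ∧ s / t ≤ L := by
  have ha : 0 < |a| := abs_pos.2 (left_ne_zero_of_mul hab.ne')
  have hb : 0 < |b| := abs_pos.2 (right_ne_zero_of_mul hab.ne')
  refine ⟨max |a| |b| / min |a| |b|, by positivity, fun s hs t ht => ?_⟩
  have hpos : 0 < s / t := div_pos_iff.2 (mul_pos_iff.1 (mul_pos_of_mem_Icc hab hs ht))
  refine ⟨hpos, ?_⟩
  rw [← abs_of_pos hpos, abs_div]
  have := min_abs_le_abs_of_mem_Icc hab ht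
  have := abs_le_max_abs_abs hs.1 hs.2
  gcongr

open scoped Laplacian in
lemma HasAxisBounds.exists_slice_bounds (hq : HasAxisBounds a b r κ C q)
    (hhom : IsNegHomogeneousOn 2 q (OmegaR a b r \ axis3)) (hab : a < b) (hab' : 0 < a * b)
    (hr : 0 < r) (hr1 : r ≤ 1) (hκ : 0 ≤ κ) :
    ∃ m, 0 < m ∧ m ≤ r ∧ ∃ K, ∀ z ≠ 0, ‖z‖ < m →
      ‖complexGrad (fun w => q (slicePoint ((a + b) / 2) w)) z‖ ≤ K * ‖z‖ ^ (-κ - 1) ∧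
      |Δ (fun w => q (slicePoint ((a + b) / 2) w)) z| ≤ K * ‖z‖ ^ (-κ - 1) := by
  have hlt : 0 < min (r / 4) ((b - a) / 6) := lt_min (by positivity) (by linarith)
  obtain ⟨m, hm0, hm⟩ := exists_between hlt
  have hmr : 4 * m ≤ r := by linarith [hm.trans_le (min_le_left _ _)]
  have hmab : 6 * m < b - a := by linarith [hm.trans_le (min_le_right _ _)]
  have hμ : 0 < min |a| |b| := lt_min (abs_pos.2 (left_ne_zero_of_mul hab'.ne'))
    (abs_pos.2 (right_ne_zero_of_mul hab'.ne'))
  have hμab : ∀ t ∈ Set.Ioo a b, min |a| |b| ≤ |t| := fun t ht =>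
    min_abs_le_abs_of_mem_Icc hab' (Set.Ioo_subset_Icc_self ht)
  refine ⟨m, hm0, by linarith, max (2 * (7 * 2 ^ κ * C))
    (C + 7 * 2 ^ κ * ((2 + 7 * 2 ^ κ) * C / min |a| |b| + C)), fun z hz hzm => ?_⟩
  have hmem : ∀ {k}, k ≤ 3 →
      slicePoint ((a + b) / 2) z ∈ OmegaR (a + k * m) (b - k * m) m \ axis3 := fun {k} hk =>
    have hkm : k * m ≤ 3 * m := by gcongr
    slicePoint_mem_OmegaR_diff_axis3 ⟨by linarith, by linarith⟩ hz hzm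
  have hmem₁ := hmem (k := 1) (by norm_num)
  rw [one_mul] at hmem₁
  have hsmooth := hq.contDiffAt _ (mem_OmegaR_diff_axis3_of_shrink (by linarith) hmem₁)
  have hgrad := hq.norm_fderiv_le hr1 hκ (by linarith) hmem₁
  have hlap := hq.abs_lap3_le _ (mem_OmegaR_diff_axis3_of_shrink (by linarith) hmem₁)
  have hpd := hq.abs_pd_two_pd_two_le hhom hr1 hκ hμ hμab hmr (hmem le_rfl)
  rw [rho_slicePoint] at hgrad hlap hpd
  constructor
  · refine (norm_complexGrad_comp_slicePoint_le (hsmooth.differentiableAt three_ne_zero)).trans ?_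
    refine le_trans ?_ (mul_le_mul_of_nonneg_right (le_max_left _ _) (by positivity))
    linarith
  · rw [laplacian_comp_slicePoint (hsmooth.of_le (by norm_num))]
    refine le_trans ?_ (mul_le_mul_of_nonneg_right (le_max_right _ _) (by positivity))
    linarith [abs_sub (lap3 q (slicePoint ((a + b) / 2) z))
      (pd 2 (pd 2 q) (slicePoint ((a + b) / 2) z))]

theorem HasAxisBounds.exists_singularProfile_slice (hq : HasAxisBounds a b r κ C q)
    (hhom : IsNegHomogeneousOn 2 q (OmegaR a b r \ axis3)) (hab : a < b) (hab' : 0 < a * b)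
    (hr : 0 < r) (hr1 : r ≤ 1) (hκ : κ ∈ Set.Ioo 0 2) :
    ∃ m, 0 < m ∧ m ≤ r ∧ ∃ (c₀ : ℝ) (c : ℂ), (κ < 1 → c = 0) ∧ ∀ κ', κ < κ' → ∃ K, 0 ≤ K ∧
      ∀ z ≠ 0, ‖z‖ < m → ‖complexGrad (fun w => q (slicePoint ((a + b) / 2) w)) z
        - complexGrad (singularProfile c₀ c) z‖ ≤ K * ‖z‖ ^ (-κ') := by
  obtain ⟨m, hm, hmr, K, hK⟩ := hq.exists_slice_bounds hhom hab hab' hr hr1 hκ.1.le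
  have hsmooth : ContDiffOn ℝ 2 (fun w => q (slicePoint ((a + b) / 2) w)) (ball 0 m \ {0}) :=
    fun z hz => (((hq.contDiffAt _ (slicePoint_mem_OmegaR_diff_axis3
      ⟨by linarith, by linarith⟩ hz.2 ((mem_ball_zero_iff.1 hz.1).trans_le hmr))).of_le
        (by norm_num)).comp z (contDiff_slicePoint _).contDiffAt).contDiffWithinAt
  exact ⟨m / 4, by positivity, by linarith, exists_singularProfile hm (hmr.trans hr1) hκ hsmooth
    (fun z hz hzm => (hK z hz hzm).1) fun z hz hzm => (hK z hz hzm).2⟩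

end SliceAsymptotics

section AxisRemainder

variable {a b r R t₀ t κ κ' c₀ C K L m : ℝ} {c z : ℂ} {q : V3 → ℝ}

/-- What is left of `q` after subtracting the singular profile `c₀ ln|z| + Re (c / z)` of the slice
`x₃ = t₀`, with its coefficients rescaled as `(-2)`-homogeneity dictates on the other slices. -/
def axisRemainder (t₀ c₀ : ℝ) (c : ℂ) (q : V3 → ℝ) (x : V3) : ℝ :=
  q x - singularProfile ((t₀ / x 2) ^ 2 * c₀) ((t₀ / x 2 : ℝ) * c) (axisProj x)

lemma contDiffOn_axisRemainder {n : WithTop ℕ∞} {s : Set V3} (hq : ContDiffOn ℝ n q s)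
    (hs : ∀ x ∈ s, x 2 ≠ 0 ∧ x ∉ axis3) : ContDiffOn ℝ n (axisRemainder t₀ c₀ c q) s := by
  refine hq.sub fun x hx => ContDiffAt.contDiffWithinAt ?_
  have hproj : axisProj x ≠ 0 := fun h => (hs x hx).2 (axisProj_eq_zero.1 h)
  have hratio : ContDiffAt ℝ n (fun y : V3 => t₀ / y 2) x :=
    contDiffAt_const.div (by fun_prop) (hs x hx).1
  have hlog : ContDiffAt ℝ n (fun y => log ‖axisProj y‖) x :=
    ((contDiffAt_norm ℝ hproj).comp x axisProj.contDiff.contDiffAt).log (norm_ne_zero_iff.2 hproj)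
  have hinv : ContDiffAt ℝ n (fun y => (axisProj y)⁻¹) x :=
    (contDiffAt_inv ℝ hproj).comp x axisProj.contDiff.contDiffAt
  have hcoef : ContDiffAt ℝ n (fun y : V3 => ((t₀ / y 2 : ℝ) : ℂ) * c) x :=
    (Complex.ofRealCLM.contDiff.contDiffAt.comp x hratio).mul contDiffAt_const
  exact (((hratio.pow 2).mul contDiffAt_const).mul hlog).add
    (Complex.reCLM.contDiff.contDiffAt.comp x (hcoef.mul hinv))

lemma axisRemainder_slicePoint (t₀ c₀ : ℝ) (c : ℂ) (q : V3 → ℝ) (t : ℝ) (z : ℂ) :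
    axisRemainder t₀ c₀ c q (slicePoint t z) =
      q (slicePoint t z) - singularProfile ((t₀ / t) ^ 2 * c₀) ((t₀ / t : ℝ) * c) z := by
  rw [axisRemainder, slicePoint_two, axisProj_slicePoint]

lemma IsNegHomogeneousOn.apply_slicePoint
    (hhom : IsNegHomogeneousOn 2 q (OmegaR a b R \ axis3)) (ht₀ : t₀ ∈ Set.Ioo a b)
    (ht : t ∈ Set.Ioo a b) (hl : 0 < t₀ / t) (hz : z ≠ 0) (hzR : ‖z‖ < R)
    (hlz : t₀ / t * ‖z‖ < R) :
    q (slicePoint t z) = (t₀ / t) ^ 2 * q (slicePoint t₀ ((t₀ / t : ℝ) * z)) := by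
  have ht0 : t ≠ 0 := fun h => by simp [h] at hl
  have hsmul : (t₀ / t) • slicePoint t z = slicePoint t₀ ((t₀ / t : ℝ) * z) := by
    rw [smul_slicePoint, div_mul_cancel₀ _ ht0]
  have hscale := hhom _ (slicePoint_mem_OmegaR_diff_axis3 ht hz hzR) _ hl (by
    rw [hsmul]
    refine slicePoint_mem_OmegaR_diff_axis3 ht₀ (mul_ne_zero (mod_cast hl.ne') hz) ?_
    rwa [norm_mul, Complex.norm_of_nonneg hl.le])
  rw [← hsmul, hscale, mul_inv_cancel_left₀ (pow_ne_zero 2 hl.ne')]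

lemma complexGrad_axisRemainder_slicePoint
    (hhom : IsNegHomogeneousOn 2 q (OmegaR a b R \ axis3))
    (hq : ∀ x ∈ OmegaR a b R \ axis3, DifferentiableAt ℝ q x) (ht₀ : t₀ ∈ Set.Ioo a b)
    (ht : t ∈ Set.Ioo a b) (hl : 0 < t₀ / t) (hz : z ≠ 0) (hzR : ‖z‖ < R)
    (hlz : t₀ / t * ‖z‖ < R) :
    complexGrad (fun w => axisRemainder t₀ c₀ c q (slicePoint t w)) z =
      (t₀ / t : ℝ) ^ 3 * (complexGrad (fun w => q (slicePoint t₀ w)) ((t₀ / t : ℝ) * z)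
        - complexGrad (singularProfile c₀ c) ((t₀ / t : ℝ) * z)) := by
  have hl' : ((t₀ / t : ℝ) : ℂ) ≠ 0 := mod_cast hl.ne'
  have hlz' : ((t₀ / t : ℝ) : ℂ) * z ≠ 0 := mul_ne_zero hl' hz
  have hslice : (fun w => q (slicePoint t w)) =ᶠ[𝓝 z]
      fun w => (t₀ / t) ^ 2 * q (slicePoint t₀ ((t₀ / t : ℝ) * w)) := by
    filter_upwards [isOpen_ne.mem_nhds hz, continuous_norm.continuousAt.eventually_lt_const hzR,
      (continuous_norm.const_mul (t₀ / t)).continuousAt.eventually_lt_const hlz]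
      with w hw hwR hlw using hhom.apply_slicePoint ht₀ ht hl hw hwR hlw
  have hdiff : ∀ {s w}, s ∈ Set.Ioo a b → w ≠ 0 → ‖w‖ < R →
      DifferentiableAt ℝ (fun w => q (slicePoint s w)) w := fun {s w} hs hw hwR =>
    (hq _ (slicePoint_mem_OmegaR_diff_axis3 hs hw hwR)).comp w
      ((contDiff_slicePoint (n := 1) s).differentiable one_ne_zero w)
  simp only [axisRemainder_slicePoint]
  rw [complexGrad_sub (hdiff ht hz hzR) (differentiableAt_singularProfile _ _ hz),
    complexGrad_congr hslice, complexGrad_const_mul_comp_mul (hdiff ht₀ hlz' (by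
      rwa [norm_mul, Complex.norm_of_nonneg hl.le])),
    complexGrad_singularProfile _ _ hz, complexGrad_singularProfile _ _ hlz']
  generalize t₀ / t = l at hl' ⊢
  push_cast
  field_simp

lemma norm_complexGrad_axisRemainder_slicePoint_le
    (hhom : IsNegHomogeneousOn 2 q (OmegaR a b R \ axis3))
    (hq : ∀ x ∈ OmegaR a b R \ axis3, DifferentiableAt ℝ q x) (ht₀ : t₀ ∈ Set.Ioo a b)
    (hκ' : 0 ≤ κ') (hK0 : 0 ≤ K) (hmR : m ≤ R)
    (hK : ∀ z ≠ 0, ‖z‖ < m → ‖complexGrad (fun w => q (slicePoint t₀ w)) z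
      - complexGrad (singularProfile c₀ c) z‖ ≤ K * ‖z‖ ^ (-κ'))
    (ht : t ∈ Set.Ioo a b) (hl : 0 < t₀ / t) (hlL : t₀ / t ≤ L) (hlL' : t / t₀ ≤ L)
    (hz : z ≠ 0) (hzR : ‖z‖ < R) (hlz : t₀ / t * ‖z‖ < m) :
    ‖complexGrad (fun w => axisRemainder t₀ c₀ c q (slicePoint t w)) z‖
      ≤ L ^ 3 * K * L ^ κ' * ‖z‖ ^ (-κ') := by
  have hnorm : ‖((t₀ / t : ℝ) : ℂ) * z‖ = t₀ / t * ‖z‖ := by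
    rw [norm_mul, Complex.norm_of_nonneg hl.le]
  have hl' : 0 ≤ t / t₀ := inv_div t₀ t ▸ (inv_pos.2 hl).le
  have hpow : (t₀ / t) ^ (-κ') ≤ L ^ κ' := by
    rw [rpow_neg hl.le, ← inv_rpow hl.le, inv_div]
    exact rpow_le_rpow hl' hlL' hκ'
  rw [complexGrad_axisRemainder_slicePoint hhom hq ht₀ ht hl hz hzR (hlz.trans_le hmR), norm_mul,
    norm_pow, Complex.norm_of_nonneg hl.le]
  calc (t₀ / t) ^ 3 * ‖complexGrad (fun w => q (slicePoint t₀ w)) ((t₀ / t : ℝ) * z)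
        - complexGrad (singularProfile c₀ c) ((t₀ / t : ℝ) * z)‖
      ≤ L ^ 3 * (K * (t₀ / t * ‖z‖) ^ (-κ')) := by
        have : 0 ≤ L := hl.le.trans hlL
        gcongr
        exact hnorm ▸ hK _ (mul_ne_zero (mod_cast hl.ne') hz) (hnorm ▸ hlz)
    _ = L ^ 3 * K * (t₀ / t) ^ (-κ') * ‖z‖ ^ (-κ') := by
        rw [mul_rpow hl.le (norm_nonneg z)]
        ring
    _ ≤ L ^ 3 * K * L ^ κ' * ‖z‖ ^ (-κ') := by
        have : 0 ≤ L := hl.le.trans hlL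
        gcongr

lemma abs_pd_axisRemainder_le (hhom : IsNegHomogeneousOn 2 q (OmegaR a b R \ axis3))
    (hq : ContDiffOn ℝ 1 q (OmegaR a b R \ axis3))
    (hL : ∀ s ∈ Set.Icc a b, ∀ t ∈ Set.Icc a b, 0 < s / t ∧ s / t ≤ L)
    (ht₀ : t₀ ∈ Set.Ioo a b) (hκ' : 0 ≤ κ') (hK0 : 0 ≤ K) (hmR : m ≤ R)
    (hK : ∀ z ≠ 0, ‖z‖ < m → ‖complexGrad (fun w => q (slicePoint t₀ w)) z
      - complexGrad (singularProfile c₀ c) z‖ ≤ K * ‖z‖ ^ (-κ'))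
    {x : V3} (hx : x ∈ OmegaR a b R \ axis3) (hxm : L * rho x < m) :
    |pd 0 (axisRemainder t₀ c₀ c q) x| ≤ L ^ 3 * K * L ^ κ' * rho x ^ (-κ') ∧
      |pd 1 (axisRemainder t₀ c₀ c q) x| ≤ L ^ 3 * K * L ^ κ' * rho x ^ (-κ') := by
  have hnhds : ∀ y ∈ OmegaR a b R \ axis3, OmegaR a b R \ axis3 ∈ 𝓝 y := fun y hy =>
    (isOpen_OmegaR_diff_axis3 a b R).mem_nhds hy
  have hcoord : ∀ y ∈ OmegaR a b R \ axis3, y 2 ∈ Set.Icc a b := fun y hy =>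
    ⟨hy.1.1.le, hy.1.2.1.le⟩
  have ht₀' : t₀ ∈ Set.Icc a b := Set.Ioo_subset_Icc_self ht₀
  have hl := hL _ ht₀' _ (hcoord x hx)
  have hrem : DifferentiableAt ℝ (axisRemainder t₀ c₀ c q) (slicePoint (x 2) (axisProj x)) := by
    rw [slicePoint_axisProj]
    refine ((contDiffOn_axisRemainder hq fun y hy => ⟨fun h => ?_, hy.2⟩).contDiffAt
      (hnhds x hx)).differentiableAt one_ne_zero
    simpa [h] using (hL _ (hcoord y hy) _ (hcoord y hy)).1
  have hgrad := norm_complexGrad_axisRemainder_slicePoint_le hhom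
    (fun y hy => (hq.contDiffAt (hnhds y hy)).differentiableAt one_ne_zero) ht₀ hκ' hK0 hmR hK
    ⟨hx.1.1, hx.1.2.1⟩ hl.1 hl.2 (hL _ (hcoord x hx) _ ht₀').2
    (fun h => hx.2 (axisProj_eq_zero.1 h)) (rho_eq_norm_axisProj x ▸ hx.1.2.2)
    (rho_eq_norm_axisProj x ▸
      (mul_le_mul_of_nonneg_right hl.2 (rho_nonneg x)).trans_lt hxm)
  have hpd := abs_pd_le_norm_complexGrad hrem
  rw [slicePoint_axisProj] at hpd
  rw [rho_eq_norm_axisProj]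
  exact ⟨hpd.1.trans hgrad, hpd.2.trans hgrad⟩

lemma abs_axisRemainder_le {x : V3} (hq : |q x| ≤ C * rho x ^ (-κ)) (hκ : 0 < κ)
    (hc : κ < 1 → c = 0) (hl : 0 < t₀ / x 2) (hlL : t₀ / x 2 ≤ L) (hx : x ∉ axis3)
    (hx1 : rho x ≤ 1) :
    |axisRemainder t₀ c₀ c q x| ≤ (C + (L ^ 2 * |c₀| / κ + L * ‖c‖)) * rho x ^ (-κ) := by
  rw [add_mul]
  rw [rho_eq_norm_axisProj] at hq hx1 ⊢
  refine (abs_sub _ _).trans (add_le_add hq ((abs_singularProfile_le hκ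
    (fun h => by rw [hc h, mul_zero]) (fun h => hx (axisProj_eq_zero.1 h)) hx1).trans ?_))
  rw [abs_mul, abs_pow, abs_of_pos hl, norm_mul, Complex.norm_of_nonneg hl.le]
  gcongr

end AxisRemainder

section RemainderBounds

variable {a b r R κ C : ℝ} {q : V3 → ℝ}

lemma exists_norm_le_and_norm_fderiv_le {E F : Type*} [NormedAddCommGroup E] [NormedSpace ℝ E]
    [NormedAddCommGroup F] [NormedSpace ℝ F] {s K : Set E} {f : E → F} (hs : UniqueDiffOn ℝ s)
    (hf : ContDiffOn ℝ 1 f s) (hK : IsCompact K) (hKs : K ⊆ s) :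
    ∃ B, 0 ≤ B ∧ ∀ x ∈ K, s ∈ 𝓝 x → ‖f x‖ ≤ B ∧ ‖fderiv ℝ f x‖ ≤ B := by
  obtain ⟨B, hB⟩ := hK.exists_bound_of_continuousOn (hf.continuousOn.mono hKs)
  obtain ⟨B', hB'⟩ := hK.exists_bound_of_continuousOn
    ((hf.continuousOn_fderivWithin hs le_rfl).mono hKs)
  refine ⟨max 0 (max B B'), le_max_left _ _, fun x hx hxs => ⟨?_, ?_⟩⟩
  · exact (hB x hx).trans (le_max_of_le_right (le_max_left _ _))
  · rw [← fderivWithin_of_mem_nhds hxs]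
    exact (hB' x hx).trans (le_max_of_le_right (le_max_right _ _))

lemma uniqueDiffOn_closure_OmegaR_diff_axis3 (hab : a < b) (hR : 0 < R) :
    UniqueDiffOn ℝ (closure (OmegaR a b R) \ axis3) := by
  refine (uniqueDiffOn_convex (convex_OmegaR a b R).closure ?_).inter isClosed_axis3.isOpen_compl
  refine Set.Nonempty.mono (isOpen_OmegaR a b R).subset_interior_closure
    ⟨slicePoint ((a + b) / 2) 0, ?_, ?_, ?_⟩
  · rw [slicePoint_two]
    linarith
  · rw [slicePoint_two]
    linarith
  · rwa [rho_slicePoint, norm_zero]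

lemma exists_bounds_away_from_axis (hab : a < b) (hR : 0 < R)
    (hq : ContDiffOn ℝ 1 q (closure (OmegaR a b R) \ axis3)) (hr : 0 < r) :
    ∃ B, 0 ≤ B ∧ ∀ x ∈ OmegaR a b R, r ≤ rho x → |q x| ≤ B ∧ ∀ j, |pd j q x| ≤ B := by
  have hcompact : IsCompact (closure (OmegaR a b R) ∩ {x | r ≤ rho x}) :=
    (isBounded_OmegaR a b R).isCompact_closure.inter_right
      (isClosed_le continuous_const continuous_rho)
  obtain ⟨B, hB0, hB⟩ := exists_norm_le_and_norm_fderiv_le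
    (uniqueDiffOn_closure_OmegaR_diff_axis3 hab hR) hq hcompact
    fun x hx => ⟨hx.1, rho_pos.1 (hr.trans_le hx.2)⟩
  refine ⟨B, hB0, fun x hx hxr => ?_⟩
  have hnhds : closure (OmegaR a b R) \ axis3 ∈ 𝓝 x :=
    mem_of_superset ((isOpen_OmegaR_diff_axis3 a b R).mem_nhds
      ⟨hx, rho_pos.1 (hr.trans_le hxr)⟩) (Set.sdiff_subset_sdiff_left subset_closure)
  have hBx := hB x ⟨subset_closure hx, hxr⟩ hnhds
  exact ⟨hBx.1, fun j => (abs_pd_le j q x).trans hBx.2⟩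

theorem HasAxisBounds.exists_axisRemainder_bounds_near_axis (hq : HasAxisBounds a b r κ C q)
    (hq1 : ContDiffOn ℝ 1 q (OmegaR a b R \ axis3))
    (hhom : IsNegHomogeneousOn 2 q (OmegaR a b R \ axis3)) (hab : a < b) (hab' : 0 < a * b)
    (hr : 0 < r) (hr1 : r ≤ 1) (hrR : r ≤ R) (hκ : κ ∈ Set.Ioo 0 2) :
    ∃ (c₀ : ℝ) (c : ℂ) (m : ℝ), 0 < m ∧ ∀ κ', κ < κ' → ∃ K, ∀ x ∈ OmegaR a b R \ axis3,
      rho x < m → |axisRemainder ((a + b) / 2) c₀ c q x| ≤ K * rho x ^ (-κ') ∧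
        |pd 0 (axisRemainder ((a + b) / 2) c₀ c q) x| ≤ K * rho x ^ (-κ') ∧
        |pd 1 (axisRemainder ((a + b) / 2) c₀ c q) x| ≤ K * rho x ^ (-κ') := by
  have hsub : OmegaR a b r \ axis3 ⊆ OmegaR a b R \ axis3 :=
    fun x hx => ⟨⟨hx.1.1, hx.1.2.1, hx.1.2.2.trans_le hrR⟩, hx.2⟩
  obtain ⟨m, hm, hmr, c₀, c, hc, happrox⟩ :=
    hq.exists_singularProfile_slice (hhom.mono hsub) hab hab' hr hr1 hκ
  obtain ⟨L, hL, hratio⟩ := exists_div_le_of_mem_Icc hab'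
  have ht₀ : (a + b) / 2 ∈ Set.Ioo a b := ⟨by linarith, by linarith⟩
  refine ⟨c₀, c, min (m / L) m, by positivity, fun κ' hκ' => ?_⟩
  obtain ⟨K, hK0, hK⟩ := happrox κ' hκ'
  refine ⟨max (C + (L ^ 2 * |c₀| / κ + L * ‖c‖)) (L ^ 3 * K * L ^ κ'), fun x hx hxm => ?_⟩
  have hρ : 0 < rho x := rho_pos.2 hx.2
  have hρr : rho x < r := (hxm.trans_le (min_le_right _ _)).trans_le hmr
  have hl := hratio _ (Set.Ioo_subset_Icc_self ht₀) (x 2) ⟨hx.1.1.le, hx.1.2.1.le⟩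
  have hxr : x ∈ OmegaR a b r \ axis3 := ⟨⟨hx.1.1, hx.1.2.1, hρr⟩, hx.2⟩
  have habs := abs_axisRemainder_le (c₀ := c₀) (hq.abs_le x hxr) hκ.1 hc hl.1 hl.2 hx.2
    (hρr.le.trans hr1)
  have hpd := abs_pd_axisRemainder_le hhom hq1 hratio ht₀ (hκ.1.trans hκ').le hK0 (hmr.trans hrR)
    hK hx ((lt_div_iff₀' hL).1 (hxm.trans_le (min_le_left _ _)))
  have hmono : rho x ^ (-κ) ≤ rho x ^ (-κ') :=
    rpow_le_rpow_of_exponent_ge hρ (hρr.le.trans hr1) (neg_le_neg hκ'.le)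
  have hC : 0 ≤ C := hq.nonneg hxr
  have hκ0 := hκ.1
  refine ⟨habs.trans (mul_le_mul (le_max_left _ _) hmono (by positivity) (by positivity)),
    hpd.1.trans ?_, hpd.2.trans ?_⟩ <;> gcongr <;> exact le_max_right _ _

theorem HasAxisBounds.exists_axisRemainder_bounds (hq : HasAxisBounds a b r κ C q)
    (hq1 : ContDiffOn ℝ 1 q (closure (OmegaR a b R) \ axis3))
    (hhom : IsNegHomogeneousOn 2 q (OmegaR a b R \ axis3)) (hab : a < b) (hab' : 0 < a * b)
    (hr : 0 < r) (hr1 : r ≤ 1) (hrR : r ≤ R) (hκ : κ ∈ Set.Ioo 0 2) :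
    ∃ (c₀ : ℝ) (c : ℂ), ∀ κ', κ < κ' → ∃ K, ∀ x ∈ OmegaR a b R \ axis3,
      |axisRemainder ((a + b) / 2) c₀ c q x| ≤ K * rho x ^ (-κ') ∧
        |pd 0 (axisRemainder ((a + b) / 2) c₀ c q) x| ≤ K * rho x ^ (-κ') ∧
        |pd 1 (axisRemainder ((a + b) / 2) c₀ c q) x| ≤ K * rho x ^ (-κ') := by
  have hR : 0 < R := hr.trans_le hrR
  obtain ⟨c₀, c, m, hm, hnear⟩ := hq.exists_axisRemainder_bounds_near_axis
    (hq1.mono (Set.sdiff_subset_sdiff_left subset_closure)) hhom hab hab' hr hr1 hrR hκ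
  have hcoord : ∀ x ∈ closure (OmegaR a b R) \ axis3, x 2 ≠ 0 ∧ x ∉ axis3 := fun x hx =>
    have hx2 := coord_two_mem_Icc_of_mem_closure hx.1
    ⟨left_ne_zero_of_mul (mul_pos_of_mem_Icc hab' hx2 hx2).ne', hx.2⟩
  obtain ⟨B, hB0, hB⟩ := exists_bounds_away_from_axis hab hR
    (contDiffOn_axisRemainder (t₀ := (a + b) / 2) (c₀ := c₀) (c := c) hq1 hcoord) hm
  refine ⟨c₀, c, fun κ' hκ' => ?_⟩
  obtain ⟨K, hK⟩ := hnear κ' hκ'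
  refine ⟨max K (B * R ^ κ'), fun x hx => ?_⟩
  have hρ : 0 < rho x := rho_pos.2 hx.2
  rcases lt_or_ge (rho x) m with hxm | hxm
  · have hle : K * rho x ^ (-κ') ≤ max K (B * R ^ κ') * rho x ^ (-κ') :=
      mul_le_mul_of_nonneg_right (le_max_left _ _) (by positivity)
    obtain ⟨h, h0, h1⟩ := hK x hx hxm
    exact ⟨h.trans hle, h0.trans hle, h1.trans hle⟩
  · have hone : 1 ≤ R ^ κ' * rho x ^ (-κ') := by
      rw [rpow_neg hρ.le, ← div_eq_mul_inv, one_le_div (by positivity)]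
      exact rpow_le_rpow hρ.le hx.1.2.2.le (hκ.1.trans hκ').le
    have hle : B ≤ max K (B * R ^ κ') * rho x ^ (-κ') :=
      calc B ≤ B * (R ^ κ' * rho x ^ (-κ')) := le_mul_of_one_le_right hB0 hone
        _ = B * R ^ κ' * rho x ^ (-κ') := (mul_assoc _ _ _).symm
        _ ≤ _ := mul_le_mul_of_nonneg_right (le_max_right _ _) (by positivity)
    obtain ⟨h, hpd⟩ := hB x hx.1 hxm
    exact ⟨h.trans hle, (hpd 0).trans hle, (hpd 1).trans hle⟩

end RemainderBounds

section IntegrabilityOfPowers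

variable {E : Type*} [NormedAddCommGroup E] [NormedSpace ℝ E] [FiniteDimensional ℝ E]
  [MeasurableSpace E] [BorelSpace E] {μ : Measure E} [μ.IsAddHaarMeasure] {R κ s : ℝ}

lemma memLp_norm_rpow_ball (hE : 0 < Module.finrank ℝ E) (hs : 0 < s)
    (hκs : κ * s < Module.finrank ℝ E) :
    MemLp (fun y : E => ‖y‖ ^ (-κ)) (ENNReal.ofReal s) (μ.restrict (ball 0 R)) := by
  have hmeas : Measurable fun y : E => ‖y‖ ^ (-κ) := measurable_norm.pow_const _
  rw [← integrable_norm_rpow_iff hmeas.aestronglyMeasurable (by simpa using hs)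
    ENNReal.ofReal_ne_top, ENNReal.toReal_ofReal hs.le]
  refine integrableOn_ball_of_norm_le_rpow (α := κ * s) (C := 1) hE hκs
    (Eventually.of_forall fun y => ?_) (hmeas.norm.pow_const s).aestronglyMeasurable
  rw [Real.norm_of_nonneg (by positivity), Real.norm_of_nonneg (by positivity),
    ← rpow_mul (norm_nonneg y), neg_mul, one_mul]

theorem exists_eLpNorm_ball_le_of_abs_le_rpow (hE : 0 < Module.finrank ℝ E) (hs : 0 < s)
    (hκs : κ * s < Module.finrank ℝ E) (K R : ℝ) :
    ∃ C : ℝ≥0∞, C ≠ ⊤ ∧ ∀ f : E → ℝ, (∀ y ≠ 0, ‖y‖ < R → |f y| ≤ K * ‖y‖ ^ (-κ)) →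
      eLpNorm f (ENNReal.ofReal s) (μ.restrict (ball 0 R)) ≤ C := by
  have : Nontrivial E := Module.nontrivial_of_finrank_pos hE
  refine ⟨_, ((memLp_norm_rpow_ball (μ := μ) (R := R) hE hs hκs).const_mul K).eLpNorm_ne_top,
    fun f hf => eLpNorm_mono_ae_real ?_⟩
  filter_upwards [ae_restrict_of_ae (Measure.ae_ne μ 0), ae_restrict_mem measurableSet_ball]
    with y hy hyR using hf y hy (mem_ball_zero_iff.1 hyR)

end IntegrabilityOfPowers

section Divergence

variable {F : V3 → V3} {x : V3}

lemma norm_iteratedFDeriv_coord_le {n : ℕ} (hF : ContDiffAt ℝ n F x) (j : Fin 3) :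
    ‖iteratedFDeriv ℝ n (fun y => F y j) x‖ ≤ ‖iteratedFDeriv ℝ n F x‖ := by
  have hproj : ‖(EuclideanSpace.proj j : V3 →L[ℝ] ℝ)‖ ≤ 1 :=
    ContinuousLinearMap.opNorm_le_bound _ zero_le_one fun y => by
      simpa using PiLp.norm_apply_le y j
  exact ((EuclideanSpace.proj j : V3 →L[ℝ] ℝ).norm_iteratedFDeriv_comp_left hF le_rfl).trans
    (mul_le_of_le_one_left (norm_nonneg _) hproj)

lemma abs_pd_pd_le (i j : Fin 3) {f : V3 → ℝ} (hf : ContDiffAt ℝ 2 f x) :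
    |pd i (pd j f) x| ≤ ‖iteratedFDeriv ℝ 2 f x‖ := by
  rw [pd_pd i j hf]
  simpa [iteratedFDeriv_two_apply, Fin.prod_univ_two, e3]
    using (iteratedFDeriv ℝ 2 f x).le_opNorm ![e3 i, e3 j]

lemma abs_divergence_le (hF : ContDiffAt ℝ 1 F x) :
    |∑ j, pd j (fun z => F z j) x| ≤ 3 * ‖iteratedFDeriv ℝ 1 F x‖ := by
  refine (Finset.abs_sum_le_sum_abs _ _).trans ((Finset.sum_le_card_nsmul _ _ _ fun j _ =>
    (abs_pd_le j _ x).trans ?_).trans_eq (nsmul_eq_mul 3 _))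
  rw [← norm_iteratedFDeriv_one]
  exact norm_iteratedFDeriv_coord_le hF j

lemma abs_pd_divergence_le (i : Fin 3) (hF : ContDiffAt ℝ 2 F x) :
    |pd i (fun y => ∑ j, pd j (fun z => F z j) y) x| ≤ 3 * ‖iteratedFDeriv ℝ 2 F x‖ := by
  have hcoord : ∀ j, ContDiffAt ℝ 2 (fun z => F z j) x := (contDiffAt_piLp 2).1 hF
  rw [pd_fun_sum i fun j _ => (contDiffAt_pd (m := 1) j (hcoord j)
    (by norm_num)).differentiableAt one_ne_zero]
  exact (Finset.abs_sum_le_sum_abs _ _).trans ((Finset.sum_le_card_nsmul _ _ _ fun j _ =>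
    (abs_pd_pd_le i j (hcoord j)).trans (norm_iteratedFDeriv_coord_le hF j)).trans_eq
      (nsmul_eq_mul 3 _))

end Divergence

section Decomposition

variable {a b r R δ ε κ K s t₀ c₀ : ℝ} {c : ℂ} {F : V3 → V3} {q h : V3 → ℝ}

lemma eq_axisRemainder_add (t₀ c₀ : ℝ) (c : ℂ) (q : V3 → ℝ) (x : V3) :
    q x = axisRemainder t₀ c₀ c q x + (t₀ / x 2) ^ 2 * c₀ * log (rho x)
      + t₀ / x 2 * c.re * x 0 / rho x ^ 2 + t₀ / x 2 * c.im * x 1 / rho x ^ 2 := by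
  rw [axisRemainder, singularProfile, Complex.div_re, Complex.re_ofReal_mul,
    Complex.im_ofReal_mul, axisProj_re, axisProj_im, Complex.normSq_eq_norm_sq,
    ← rho_eq_norm_axisProj]
  ring

lemma hasAxisBounds_of_poisson (hF : ContDiffOn ℝ 2 F (OmegaR a b r \ axis3))
    (hq : ContDiffOn ℝ 3 q (OmegaR a b r \ axis3))
    (heq : ∀ x ∈ OmegaR a b r \ axis3, -lap3 q x = ∑ j, pd j (fun z => F z j) x)
    (hbound : ∀ x ∈ OmegaR a b r \ axis3, |q x| * rho x ^ (2 - δ)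
      + ∑ j ∈ Finset.range 3, ‖iteratedFDeriv ℝ j F x‖ * rho x ^ ((j : ℝ) + 2 - δ) ≤ ε) :
    HasAxisBounds a b r (2 - δ) (3 * ε) q := by
  have hnhds : ∀ x ∈ OmegaR a b r \ axis3, OmegaR a b r \ axis3 ∈ 𝓝 x := fun x hx =>
    (isOpen_OmegaR_diff_axis3 a b r).mem_nhds hx
  have hterms : ∀ x ∈ OmegaR a b r \ axis3, |q x| ≤ ε * rho x ^ (-(2 - δ)) ∧
      ∀ j ∈ Finset.range 3, ‖iteratedFDeriv ℝ j F x‖ ≤ ε * rho x ^ (-((j : ℝ) + 2 - δ)) := by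
    intro x hx
    have hρ : 0 < rho x := rho_pos.2 hx.2
    have hpos : ∀ j ∈ Finset.range 3,
        0 ≤ ‖iteratedFDeriv ℝ j F x‖ * rho x ^ ((j : ℝ) + 2 - δ) := fun j _ => by positivity
    have hle : ∀ {A p : ℝ}, A * rho x ^ p ≤ ε → A ≤ ε * rho x ^ (-p) := fun {A p} hA => by
      rwa [rpow_neg hρ.le, ← div_eq_mul_inv, le_div_iff₀ (by positivity)]
    have hq0 : 0 ≤ |q x| * rho x ^ (2 - δ) := by positivity
    exact ⟨hle ((le_add_of_nonneg_right (Finset.sum_nonneg hpos)).trans (hbound x hx)),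
      fun j hj => hle ((Finset.single_le_sum hpos hj).trans
        ((le_add_of_nonneg_left hq0).trans (hbound x hx)))⟩
  refine ⟨fun x hx => hq.contDiffAt (hnhds x hx), fun x hx => ?_, fun x hx => ?_, fun x hx => ?_⟩
  · linarith [(hterms x hx).1, abs_nonneg (q x)]
  · have hlap : lap3 q x = -∑ j, pd j (fun z => F z j) x := by rw [← heq x hx, neg_neg]
    rw [hlap, abs_neg, mul_assoc]
    refine (abs_divergence_le ((hF.contDiffAt (hnhds x hx)).of_le one_le_two)).trans ?_
    have := (hterms x hx).2 1 (by simp)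
    rw [show -(2 - δ) - 1 = -(((1 : ℕ) : ℝ) + 2 - δ) by push_cast; ring]
    gcongr
  · have hlap : lap3 q =ᶠ[𝓝 x] -fun y => ∑ j, pd j (fun z => F z j) y :=
      (eventually_of_mem (hnhds x hx) heq).mono fun y hy => by simp [← hy]
    rw [pd_congr 2 hlap, pd, fderiv_neg, neg_apply, abs_neg, mul_assoc]
    refine (abs_pd_divergence_le 2 (hF.contDiffAt (hnhds x hx))).trans ?_
    have := (hterms x hx).2 2 (by simp)
    rw [show -(2 - δ) - 2 = -(((2 : ℕ) : ℝ) + 2 - δ) by push_cast; ring]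
    gcongr

lemma exists_eLpNorm_emb_le (hs : 0 < s) (hκs : κ * s < 2)
    (hh : ∀ x ∈ OmegaR a b R \ axis3, |h x| ≤ K * rho x ^ (-κ) ∧
      |pd 0 h x| ≤ K * rho x ^ (-κ) ∧ |pd 1 h x| ≤ K * rho x ^ (-κ)) :
    ∃ C : ℝ≥0∞, C ≠ ⊤ ∧ ∀ t ∈ Set.Ioo a b,
      eLpNorm (fun y : V2 => h (emb y t)) (ENNReal.ofReal s) (volume.restrict (ball 0 R))
        + eLpNorm (fun y : V2 => pd 0 h (emb y t)) (ENNReal.ofReal s)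
          (volume.restrict (ball 0 R))
        + eLpNorm (fun y : V2 => pd 1 h (emb y t)) (ENNReal.ofReal s)
          (volume.restrict (ball 0 R)) ≤ C := by
  obtain ⟨C, hC, hCle⟩ := exists_eLpNorm_ball_le_of_abs_le_rpow (μ := (volume : Measure V2))
    (by simp) hs (by simpa using hκs) K R
  refine ⟨C + C + C, by simp [hC], fun t ht => ?_⟩
  have hemb := fun (y : V2) hy hyR => rho_emb y t ▸ hh _ (emb_mem_OmegaR_diff_axis3 ht hy hyR)
  exact add_le_add (add_le_add (hCle _ fun y hy hyR => (hemb y hy hyR).1)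
    (hCle _ fun y hy hyR => (hemb y hy hyR).2.1)) (hCle _ fun y hy hyR => (hemb y hy hyR).2.2)

theorem poisson_decomposition_general {n : WithTop ℕ∞} (hn : 3 ≤ n) (hR : 0 < R) (hab : a < b)
    (hab' : 0 < a * b) (hδ : δ ∈ Set.Ioo 0 2)
    (hF : ContDiffOn ℝ 2 F (OmegaR a b R \ axis3))
    (hq : ContDiffOn ℝ n q (closure (OmegaR a b R) \ axis3))
    (hhom : IsNegHomogeneousOn 2 q (OmegaR a b R \ axis3))
    (heq : ∀ x ∈ OmegaR a b R \ axis3, -lap3 q x = ∑ j, pd j (fun z => F z j) x)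
    (hr : 0 < r) (hbound : ∀ x ∈ OmegaR a b R \ axis3, rho x < r → |q x| * rho x ^ (2 - δ)
      + ∑ j ∈ Finset.range 3, ‖iteratedFDeriv ℝ j F x‖ * rho x ^ ((j : ℝ) + 2 - δ) ≤ ε) :
    ∃ (h : V3 → ℝ) (a0 a1 b1 : ℝ → ℝ),
      ContinuousOn a0 (Set.Ioo a b) ∧ ContinuousOn a1 (Set.Ioo a b) ∧
      ContinuousOn b1 (Set.Ioo a b) ∧ ContDiffOn ℝ n h (OmegaR a b R \ axis3) ∧
      (∀ x ∈ OmegaR a b R \ axis3,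
        q x = h x + a0 (x 2) * log (rho x) + a1 (x 2) * x 0 / rho x ^ 2
          + b1 (x 2) * x 1 / rho x ^ 2) ∧
      ∀ s, 0 < s → s < 2 / (2 - δ) → ∃ C : ℝ≥0∞, C ≠ ⊤ ∧ ∀ t ∈ Set.Ioo a b,
        eLpNorm (fun y : V2 => h (emb y t)) (ENNReal.ofReal s) (volume.restrict (ball 0 R))
          + eLpNorm (fun y : V2 => pd 0 h (emb y t)) (ENNReal.ofReal s)
            (volume.restrict (ball 0 R))
          + eLpNorm (fun y : V2 => pd 1 h (emb y t)) (ENNReal.ofReal s)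
            (volume.restrict (ball 0 R)) ≤ C := by
  have hsub : OmegaR a b (min r (min R 1)) \ axis3 ⊆ OmegaR a b R \ axis3 := fun x hx =>
    ⟨⟨hx.1.1, hx.1.2.1, hx.1.2.2.trans_le ((min_le_right _ _).trans (min_le_left _ _))⟩, hx.2⟩
  have hqΩ := hq.mono (Set.sdiff_subset_sdiff_left subset_closure)
  have hbounds : HasAxisBounds a b (min r (min R 1)) (2 - δ) (3 * ε) q :=
    hasAxisBounds_of_poisson (hF.mono hsub) ((hqΩ.mono hsub).of_le hn)
      (fun x hx => heq x (hsub hx))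
      fun x hx => hbound x (hsub hx) (hx.1.2.2.trans_le (min_le_left _ _))
  obtain ⟨c₀, c, hrem⟩ := hbounds.exists_axisRemainder_bounds
    (hq.of_le (le_trans (by norm_num) hn)) hhom hab hab' (by positivity)
    ((min_le_right _ _).trans (min_le_right _ _)) ((min_le_right _ _).trans (min_le_left _ _))
    ⟨by linarith [hδ.2], by linarith [hδ.1]⟩
  have hne : ∀ t ∈ Set.Ioo a b, t ≠ 0 := fun t ht => left_ne_zero_of_mul
    (mul_pos_of_mem_Icc hab' (Set.Ioo_subset_Icc_self ht) (Set.Ioo_subset_Icc_self ht)).ne'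
  have hratio : ContinuousOn (fun t => (a + b) / 2 / t) (Set.Ioo a b) :=
    continuousOn_const.div continuousOn_id hne
  refine ⟨axisRemainder ((a + b) / 2) c₀ c q, fun t => ((a + b) / 2 / t) ^ 2 * c₀,
    fun t => (a + b) / 2 / t * c.re, fun t => (a + b) / 2 / t * c.im,
    (hratio.pow 2).mul_const c₀, hratio.mul_const c.re, hratio.mul_const c.im,
    contDiffOn_axisRemainder hqΩ fun x hx => ⟨hne _ ⟨hx.1.1, hx.1.2.1⟩, hx.2⟩,
    fun x _ => eq_axisRemainder_add _ _ _ _ x, fun s hs hsδ => ?_⟩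
  obtain ⟨κ', hκ', hκ's⟩ := exists_between ((lt_div_comm₀ hs (by linarith [hδ.2])).1 hsδ)
  obtain ⟨K, hK⟩ := hrem κ' hκ'
  exact exists_eLpNorm_emb_le hs ((lt_div_iff₀ hs).1 hκ's) hK

end Decomposition

/-- decomposition of a `(-2)`-homogeneous solution of a Poisson equation
near the singular axis (Lemma 2.2). -/
theorem poisson_decomposition (R a b δ : ℝ) (hR : 0 < R) (hab : a < b) (hab' : 0 < a * b)
    (hδ : δ ∈ Set.Ioo (0:ℝ) 2)
    (F : V3 → V3) (q : V3 → ℝ)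
    (hF_reg : ContDiffOn ℝ (⊤:ℕ∞) F (closure (OmegaR a b R) \ axis3))
    (hF_hom : ∀ x ∈ closure (OmegaR a b R) \ axis3, ∀ lam : ℝ, 0 < lam →
      lam • x ∈ closure (OmegaR a b R) \ axis3 → F (lam • x) = (lam ^ 3)⁻¹ • F x)
    (hq_reg : ContDiffOn ℝ (⊤:ℕ∞) q (closure (OmegaR a b R) \ axis3))
    (hq_hom : ∀ x ∈ closure (OmegaR a b R) \ axis3, ∀ lam : ℝ, 0 < lam →
      lam • x ∈ closure (OmegaR a b R) \ axis3 → q (lam • x) = (lam ^ 2)⁻¹ * q x)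
    (heq : ∀ x ∈ OmegaR a b R \ axis3, - lap3 q x = ∑ j, pd j (fun z => F z j) x)
    (hsmall : ∀ ε > (0:ℝ), ∃ ρ > (0:ℝ), ∀ x ∈ OmegaR a b R \ axis3, rho x < ρ →
      |q x| * rho x ^ (2 - δ)
        + ∑ j ∈ Finset.range 3, ‖iteratedFDeriv ℝ j F x‖ * rho x ^ ((j : ℝ) + 2 - δ) ≤ ε) :
    ∃ (h : V3 → ℝ) (a0 a1 b1 : ℝ → ℝ),
      ContinuousOn a0 (Set.Ioo a b) ∧ ContinuousOn a1 (Set.Ioo a b) ∧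
      ContinuousOn b1 (Set.Ioo a b) ∧
      ContDiffOn ℝ (⊤:ℕ∞) h (OmegaR a b R \ axis3) ∧
      (∀ x ∈ OmegaR a b R \ axis3,
        q x = h x + a0 (x 2) * Real.log (rho x) + a1 (x 2) * (x 0) / rho x ^ 2
          + b1 (x 2) * (x 1) / rho x ^ 2) ∧
      (∀ s : ℝ, 1 < s → s < 2 / (2 - δ) → ∀ a' b' : ℝ, a < a' → a' ≤ b' → b' < b →
        ∃ C : ℝ≥0∞, C ≠ ⊤ ∧ ∀ t ∈ Set.Icc a' b',
          eLpNorm (fun y : V2 => h (emb y t)) (ENNReal.ofReal s)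
              (volume.restrict (Metric.ball (0:V2) R))
            + eLpNorm (fun y : V2 => pd 0 h (emb y t)) (ENNReal.ofReal s)
              (volume.restrict (Metric.ball (0:V2) R))
            + eLpNorm (fun y : V2 => pd 1 h (emb y t)) (ENNReal.ofReal s)
              (volume.restrict (Metric.ball (0:V2) R)) ≤ C) := by
  have hsub : OmegaR a b R \ axis3 ⊆ closure (OmegaR a b R) \ axis3 :=
    Set.sdiff_subset_sdiff_left subset_closure
  obtain ⟨r, hr, hbound⟩ := hsmall 1 one_pos
  obtain ⟨h, a0, a1, b1, ha0, ha1, hb1, hh, hdecomp, hLs⟩ :=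
    poisson_decomposition_general (n := (⊤ : ℕ∞)) (WithTop.coe_le_coe.2 le_top) hR hab hab' hδ
      ((hF_reg.mono hsub).of_le (WithTop.coe_le_coe.2 le_top)) hq_reg
      (IsNegHomogeneousOn.mono hq_hom hsub) heq hr hbound
  exact ⟨h, a0, a1, b1, ha0, ha1, hb1, hh, hdecomp, fun s hs1 hs2 a' b' ha _ hb =>
    (hLs s (one_pos.trans hs1) hs2).imp fun C hC =>
      ⟨hC.1, fun t ht => hC.2 t ⟨ha.trans_le ht.1, ht.2.trans_lt hb⟩⟩⟩
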